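/- arXiv:1503.01605 — 2 statements merged into one kernel-verified Lean document; each statement's English description precedes it below -/
import Mathlib

section
/- Let F : 𝕋 → ℂ be a continuous surjection onto a Jordan curve γ bounding a bounded domain D, and let wₙ be a sequence of univalent harmonic mappings of the unit disk onto D converging locally uniformly to w = P[F]. If w is not constant and its image does not lie on a straight line, then w is univalent on the unit disk. -/
open MeasureTheory Set Real Filter

/-- The Poisson kernel `P(r,t) = (1−r²)/(2π(1−2r cos t + r²))`. -/
noncomputable def poissonKer (r t : ℝ) : ℝ :=
  (1 - r ^ 2) / (2 * π * (1 - 2 * r * Real.cos t + r ^ 2))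

/-- The Poisson extension `P[F](z)` of a `2π`-periodic boundary function `F : ℝ → ℂ`. -/
noncomputable def poissonExt (F : ℝ → ℂ) (z : ℂ) : ℂ :=
  ∫ t in (0:ℝ)..(2 * π), (poissonKer ‖z‖ (t - Complex.arg z) : ℂ) * F t

/-- A complex-valued harmonic mapping on an open set: `C²` with vanishing Laplacian. -/
def HarmonicOn (u : ℂ → ℂ) (s : Set ℂ) : Prop :=
  ContDiffOn ℝ 2 u s ∧
  ∀ z ∈ s, iteratedFDeriv ℝ 2 u z ![1, 1] + iteratedFDeriv ℝ 2 u z ![Complex.I, Complex.I] = 0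

/-- `HasWinding γ k` : the curve `γ` has a continuous logarithm on `ℝ`, which increases by
`2πik` on `[0, 2π]`. For a nonvanishing loop, `k` is the winding number around the origin. -/
def HasWinding (γ : ℝ → ℂ) (k : ℤ) : Prop :=
  ∃ θ : ℝ → ℂ, Continuous θ ∧ (∀ t, Complex.exp (θ t) = γ t) ∧
    θ (2 * π) - θ 0 = k * (2 * π * Complex.I)

theorem HasWinding.mul {γ₁ γ₂ : ℝ → ℂ} {k l : ℤ} (h₁ : HasWinding γ₁ k) (h₂ : HasWinding γ₂ l) :
    HasWinding (fun t ↦ γ₁ t * γ₂ t) (k + l) := by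
  obtain ⟨θ₁, hc₁, he₁, hk⟩ := h₁
  obtain ⟨θ₂, hc₂, he₂, hl⟩ := h₂
  refine ⟨fun t ↦ θ₁ t + θ₂ t, hc₁.add hc₂, fun t ↦ by rw [Complex.exp_add, he₁, he₂], ?_⟩
  push_cast
  linear_combination hk + hl

theorem HasWinding.conj {γ : ℝ → ℂ} {k : ℤ} (h : HasWinding γ k) :
    HasWinding (fun t ↦ (starRingEnd ℂ) (γ t)) (-k) := by
  obtain ⟨θ, hc, he, hk⟩ := h
  refine ⟨fun t ↦ (starRingEnd ℂ) (θ t), Complex.continuous_conj.comp hc,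
    fun t ↦ by rw [Complex.exp_conj, he], ?_⟩
  rw [← map_sub, hk, map_mul, map_mul, map_mul, Complex.conj_I, Complex.conj_ofReal, map_intCast,
    map_ofNat]
  push_cast
  ring

/-- A continuous function on a preconnected space whose values are integer multiples of a nonzero
number is constant. -/
theorem eq_of_continuous_of_forall_exists_int_mul {X : Type*} [TopologicalSpace X]
    [PreconnectedSpace X] {f : X → ℂ} (hf : Continuous f) {c : ℂ} (hc : c ≠ 0)
    (hmult : ∀ x, ∃ n : ℤ, f x = n * c) (x y : X) : f x = f y := by
  choose n hn using hmult
  have hcast : Continuous fun x ↦ ((n x : ℤ) : ℂ) := by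
    have : (fun x ↦ ((n x : ℤ) : ℂ)) = fun x ↦ f x / c := by
      ext x; rw [hn, mul_div_cancel_right₀ _ hc]
    rw [this]; fun_prop
  have hn_cont : Continuous n := by
    refine (Int.isClosedEmbedding_coe_real.continuous_iff).2 ?_
    simpa [Function.comp_def] using Complex.continuous_re.comp hcast
  rw [hn, hn, PreconnectedSpace.constant inferInstance hn_cont]

theorem HasWinding.unique {γ : ℝ → ℂ} {k l : ℤ} (h₁ : HasWinding γ k) (h₂ : HasWinding γ l) :
    k = l := by
  obtain ⟨θ₁, hc₁, he₁, hk⟩ := h₁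
  obtain ⟨θ₂, hc₂, he₂, hl⟩ := h₂
  have := eq_of_continuous_of_forall_exists_int_mul (hc₁.sub hc₂) Complex.two_pi_I_ne_zero
    (fun t ↦ by
      obtain ⟨n, hn⟩ := Complex.exp_eq_exp_iff_exists_int.1 ((he₁ t).trans (he₂ t).symm)
      exact ⟨n, by simp [hn]⟩) 0 (2 * π)
  simp only [Pi.sub_apply] at this
  have h : (k : ℂ) * (2 * π * Complex.I) = l * (2 * π * Complex.I) := by
    linear_combination hl - hk - this
  exact_mod_cast mul_right_cancel₀ Complex.two_pi_I_ne_zero h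

theorem hasWinding_circle (m : ℕ) {c : ℂ} (hc : c ≠ 0) :
    HasWinding (fun t ↦ (c * Complex.exp (t * Complex.I)) ^ m) m := by
  refine ⟨fun t ↦ m * (Complex.log c + t * Complex.I), by fun_prop, fun t ↦ ?_, ?_⟩
  · rw [Complex.exp_nat_mul, Complex.exp_add, Complex.exp_log hc]
  · push_cast; ring

/-- Rouché's theorem for winding numbers. -/
theorem HasWinding.of_norm_sub_lt {γ₁ γ₂ : ℝ → ℂ} {k : ℤ} (h : HasWinding γ₁ k)
    (hγ₂ : Continuous γ₂) (hclosed : γ₂ (2 * π) = γ₂ 0)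
    (hlt : ∀ t, ‖γ₂ t - γ₁ t‖ < ‖γ₁ t‖) : HasWinding γ₂ k := by
  have hne : ∀ t, γ₁ t ≠ 0 := fun t h0 ↦ by
    have := hlt t
    rw [h0, norm_zero] at this
    exact absurd this (norm_nonneg _).not_gt
  have hγ₁ : Continuous γ₁ := by
    obtain ⟨θ, hc, he, -⟩ := h
    simpa only [he] using Complex.continuous_exp.comp hc |>.congr he
  have hclosed₁ : γ₁ (2 * π) = γ₁ 0 := by
    obtain ⟨θ, hc, he, hk⟩ := h
    rw [← he, ← he, Complex.exp_eq_exp_iff_exists_int]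
    exact ⟨k, by linear_combination hk⟩
  have hslit : ∀ t, γ₂ t / γ₁ t ∈ Complex.slitPlane := fun t ↦ by
    have hb : γ₂ t / γ₁ t = 1 + (γ₂ t - γ₁ t) / γ₁ t := by field_simp [hne t]; ring
    rw [hb]
    refine Complex.mem_slitPlane_of_norm_lt_one ?_
    rw [norm_div]
    exact (div_lt_one (norm_pos_iff.2 (hne t))).2 (hlt t)
  have hw : HasWinding (fun t ↦ γ₂ t / γ₁ t) 0 :=
    ⟨fun t ↦ Complex.log (γ₂ t / γ₁ t), (hγ₂.div hγ₁ hne).clog hslit,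
      fun t ↦ Complex.exp_log (Complex.slitPlane_ne_zero (hslit t)), by
        simp [hclosed, hclosed₁]⟩
  have := h.mul hw
  rw [add_zero] at this
  convert this using 2 with t
  rw [mul_div_cancel₀ _ (hne t)]

/-- Homotopy invariance of the winding number. -/
theorem exists_hasWinding_homotopy {H : ℝ → ℝ → ℂ}
    (hH : ContinuousOn (Function.uncurry H) (Icc 0 1 ×ˢ univ))
    (hne : ∀ s ∈ Icc (0 : ℝ) 1, ∀ t, H s t ≠ 0)
    (hclosed : ∀ s ∈ Icc (0 : ℝ) 1, H s (2 * π) = H s 0) :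
    ∃ k : ℤ, ∀ s ∈ Icc (0 : ℝ) 1, HasWinding (H s) k := by
  let p : ℝ → ℝ := fun s ↦ projIcc (0 : ℝ) 1 zero_le_one s
  have hp : ∀ s, p s ∈ Icc (0 : ℝ) 1 := fun s ↦ (projIcc (0 : ℝ) 1 zero_le_one s).2
  have hpc : Continuous p := continuous_subtype_val.comp continuous_projIcc
  have hcont : Continuous fun x : ℝ × ℝ ↦ H (p x.1) x.2 :=
    hH.comp_continuous (f := fun x : ℝ × ℝ ↦ (p x.1, x.2)) (by fun_prop)
      fun x ↦ ⟨hp _, mem_univ _⟩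
  obtain ⟨L, ⟨-, hL⟩, -⟩ := Complex.isCoveringMapOn_exp.existsUnique_continuousMap_lifts
    (⟨_, hcont⟩ : C(ℝ × ℝ, ℂ)) (a₀ := (0, 0)) (Complex.exp_log (hne _ (hp 0) 0))
    (fun x ↦ hne _ (hp _) _)
  have hL' : ∀ s t, Complex.exp (L (s, t)) = H (p s) t := fun s t ↦ congrFun hL (s, t)
  have hmult : ∀ s : ℝ, ∃ n : ℤ, L (s, 2 * π) - L (s, 0) = n * (2 * π * Complex.I) := fun s ↦ by
    have := hL' s (2 * π)
    rw [hclosed _ (hp s), ← hL' s 0, Complex.exp_eq_exp_iff_exists_int] at this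
    obtain ⟨n, hn⟩ := this
    exact ⟨n, by rw [hn]; ring⟩
  obtain ⟨k, hk⟩ := hmult 0
  refine ⟨k, fun s hs ↦ ⟨fun t ↦ L (s, t), by fun_prop, fun t ↦ ?_, ?_⟩⟩
  · rw [hL', show p s = s by simp [p, projIcc_of_mem _ hs]]
  · rw [← hk]
    exact eq_of_continuous_of_forall_exists_int_mul
      (f := fun s : ℝ ↦ L (s, 2 * π) - L (s, 0)) (by fun_prop) Complex.two_pi_I_ne_zero hmult s 0

theorem norm_ofReal_mul_exp_mul_I {r : ℝ} (hr : 0 ≤ r) (t : ℝ) :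
    ‖(r : ℂ) * Complex.exp (t * Complex.I)‖ = r := by
  simp [Complex.norm_exp_ofReal_mul_I, abs_of_nonneg hr]

/-- A nonvanishing continuous function on a closed disk has winding number zero along the
boundary circle. -/
theorem hasWinding_zero_of_ne_zero {f : ℂ → ℂ} {z₀ : ℂ} {r : ℝ} (hr : 0 ≤ r)
    (hf : ContinuousOn f (Metric.closedBall z₀ r)) (hne : ∀ z ∈ Metric.closedBall z₀ r, f z ≠ 0) :
    HasWinding (fun t ↦ f (z₀ + r * Complex.exp (t * Complex.I))) 0 := by
  have hmem : ∀ s ∈ Icc (0 : ℝ) 1, ∀ t : ℝ,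
      z₀ + s * (r * Complex.exp (t * Complex.I)) ∈ Metric.closedBall z₀ r := fun s hs t ↦ by
    rw [mem_closedBall_iff_norm, add_sub_cancel_left, norm_mul, norm_ofReal_mul_exp_mul_I hr,
      Complex.norm_real, Real.norm_of_nonneg hs.1]
    exact mul_le_of_le_one_left hr hs.2
  obtain ⟨k, hk⟩ := exists_hasWinding_homotopy
    (H := fun s t ↦ f (z₀ + s * (r * Complex.exp (t * Complex.I))))
    (hf.comp (by fun_prop) fun x hx ↦ hmem x.1 hx.1 x.2)
    (fun s hs t ↦ hne _ (hmem s hs t)) (fun s _ ↦ by simp [Complex.exp_two_pi_mul_I])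
  have h0 := hk 0 (by simp)
  have h1 := hk 1 (by simp)
  have hconst : HasWinding (fun _ ↦ f z₀) 0 :=
    ⟨fun _ ↦ Complex.log (f z₀), continuous_const,
      fun _ ↦ Complex.exp_log (hne _ (Metric.mem_closedBall_self hr)), by simp⟩
  simp only [Complex.ofReal_zero, zero_mul, add_zero] at h0
  simpa [h0.unique hconst] using h1

open InnerProductSpace Topology in
theorem HarmonicOn.harmonicOnNhd {u : ℂ → ℂ} {s : Set ℂ} (hs : IsOpen s) (hu : HarmonicOn u s) :
    HarmonicOnNhd u s := fun z hz ↦ by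
  refine ⟨hu.1.contDiffAt (hs.mem_nhds hz), ?_⟩
  filter_upwards [hs.mem_nhds hz] with y hy
  rw [laplacian_eq_iteratedFDeriv_complexPlane]
  exact hu.2 y hy

open InnerProductSpace in
/-- A real harmonic function on the unit disk is the real part of a holomorphic function that is
real at the origin. -/
theorem exists_differentiableOn_re_eq {v : ℂ → ℝ} (hv : HarmonicOnNhd v (Metric.ball 0 1)) :
    ∃ A : ℂ → ℂ, DifferentiableOn ℂ A (Metric.ball 0 1) ∧ (A 0).im = 0 ∧
      ∀ z ∈ Metric.ball (0 : ℂ) 1, (A z).re = v z := by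
  obtain ⟨A, hA, hre⟩ := hv.exists_analyticOnNhd_ball_re_eq
  exact ⟨fun z ↦ A z - (A 0).im * Complex.I, hA.differentiableOn.sub_const _, by simp,
    fun z hz ↦ by simpa using hre hz⟩

/-- If the real parts of holomorphic functions on the unit disk, real at the origin, converge
locally uniformly, then so do the functions themselves. -/
theorem exists_tendstoLocallyUniformlyOn_of_re {A : ℕ → ℂ → ℂ} {v : ℂ → ℝ}
    (hA : ∀ n, DifferentiableOn ℂ (A n) (Metric.ball 0 1)) (hA0 : ∀ n, (A n 0).im = 0)
    (hv : TendstoLocallyUniformlyOn (fun n z ↦ (A n z).re) v atTop (Metric.ball 0 1)) :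
    ∃ A' : ℂ → ℂ, TendstoLocallyUniformlyOn A A' atTop (Metric.ball 0 1) := by
  rw [tendstoLocallyUniformlyOn_iff_forall_isCompact Metric.isOpen_ball] at hv
  have hcauchy : ∀ r < (1 : ℝ), UniformCauchySeqOn A atTop (Metric.closedBall 0 r) := by
    intro r hr
    rcases lt_or_ge r 0 with hr0 | hr0
    · simp [Metric.closedBall_eq_empty.2 hr0, UniformCauchySeqOn]
    obtain ⟨R, hrR, hR⟩ := exists_between hr
    have hvR := (hv (Metric.closedBall 0 R) (Metric.closedBall_subset_ball hR)
      (isCompact_closedBall 0 R)).uniformCauchySeqOn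
    rw [Metric.uniformCauchySeqOn_iff] at hvR ⊢
    intro ε hε
    have hd : 0 < R - r := sub_pos.2 hrR
    obtain ⟨N, hN⟩ := hvR (ε * (R - r) / 8) (by positivity)
    refine ⟨N, fun m hm n hn z hz ↦ ?_⟩
    set δ := ε * (R - r) / 8 with hδ
    have hsmall : ∀ w ∈ Metric.closedBall (0 : ℂ) R, |(A m w - A n w).re| < δ := fun w hw ↦ by
      simpa [Real.dist_eq] using hN m hm n hn w hw
    have hsub : Metric.ball (0 : ℂ) R ⊆ Metric.ball 0 1 := Metric.ball_subset_ball hR.le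
    have hzr : ‖z‖ ≤ r := by simpa using hz
    have hbc := Complex.borelCaratheodory (f := fun z ↦ A m z - A n z) (M := δ) (R := R) (z := z)
      (by positivity) (((hA m).sub (hA n)).mono hsub)
      (fun w hw ↦ ((le_abs_self _).trans (hsmall w (Metric.ball_subset_closedBall hw)).le))
      (hr0.trans_lt hrR) (by simpa using hzr.trans_lt hrR)
    have h0 : ‖A m 0 - A n 0‖ ≤ δ := by
      have him : (A m 0 - A n 0).im = 0 := by simp [hA0]
      rw [← Complex.re_add_im (A m 0 - A n 0), him]
      simpa [← Complex.ofReal_sub, ← Complex.sub_re] using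
        (hsmall 0 (Metric.mem_closedBall_self (hr0.trans hrR.le))).le
    rw [dist_eq_norm]
    refine hbc.trans_lt ?_
    have hzR : 0 < R - ‖z‖ := by linarith
    rw [← add_div, div_lt_iff₀ hzR]
    have hz0 := norm_nonneg z
    have hδ0 : 0 < δ := by positivity
    calc 2 * δ * ‖z‖ + ‖A m 0 - A n 0‖ * (R + ‖z‖) ≤ 2 * δ * 1 + δ * (1 + 1) := by
          gcongr <;> linarith
      _ < 8 * δ := by linarith
      _ = ε * (R - r) := by rw [hδ]; ring
      _ ≤ ε * (R - ‖z‖) := by gcongr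
  have hpt : ∀ z ∈ Metric.ball (0 : ℂ) 1, ∃ a, Tendsto (fun n ↦ A n z) atTop (nhds a) :=
    fun z hz ↦ cauchySeq_tendsto_of_complete
      ((hcauchy ‖z‖ (by simpa using hz)).cauchySeq (by simp))
  choose! A' hA' using hpt
  refine ⟨A', (tendstoLocallyUniformlyOn_iff_forall_isCompact Metric.isOpen_ball).2
    fun K hK hKc ↦ ?_⟩
  obtain ⟨r, hr, hKr⟩ : ∃ r < 1, K ⊆ Metric.closedBall (0 : ℂ) r := by
    rcases K.eq_empty_or_nonempty with rfl | hne
    · exact ⟨0, one_pos, empty_subset _⟩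
    obtain ⟨x, hx, hmax⟩ := hKc.exists_isMaxOn hne continuous_norm.continuousOn
    exact ⟨‖x‖, by simpa using hK hx, fun y hy ↦ by simpa using hmax hy⟩
  exact ((hcauchy r hr).mono hKr).tendstoUniformlyOn_of_tendsto fun z hz ↦ hA' z (hK hz)

open Topology in
/-- A harmonic map `h + conj g` whose analytic dilatation `g' / h'` is smaller than one at `z₀` has
positive winding number along small circles centered at `z₀`. -/
theorem exists_hasWinding_of_dilatation {h g a : ℂ → ℂ} {z₀ : ℂ} (hh : AnalyticAt ℂ h z₀)
    (hg : AnalyticAt ℂ g z₀) (hne : ¬ ∀ᶠ z in 𝓝 z₀, h z = h z₀) (ha : ContinuousAt a z₀)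
    (hlt : ‖a z₀‖ < 1) (hder : ∀ᶠ z in 𝓝 z₀, deriv g z = a z * deriv h z) :
    ∃ m : ℕ, 0 < m ∧ ∀ᶠ r : ℝ in 𝓝[>] 0, HasWinding
      (fun t ↦ (h (z₀ + r * Complex.exp (t * Complex.I)) +
        (starRingEnd ℂ) (g (z₀ + r * Complex.exp (t * Complex.I)))) -
        (h z₀ + (starRingEnd ℂ) (g z₀))) m := by
  obtain ⟨m, u, hu, hu0, hfac⟩ :=
    (hh.sub (analyticAt_const (v := h z₀))).exists_eventuallyEq_pow_smul_nonzero_iff.2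
      (by simpa [sub_eq_zero] using hne)
  simp only [Pi.sub_apply, smul_eq_mul] at hfac
  have hm : 0 < m := by
    by_contra h0
    obtain rfl : m = 0 := by omega
    have := hfac.self_of_nhds
    simp [eq_comm, hu0] at this
  refine ⟨m, hm, ?_⟩
  let k : ℂ → ℂ := fun z ↦ m * u z + (z - z₀) * deriv u z
  have hk : ContinuousAt k z₀ := by
    have := hu.continuousAt
    have := hu.deriv.continuousAt
    fun_prop
  have hdh : ∀ᶠ z in 𝓝 z₀, deriv h z = (z - z₀) ^ (m - 1) * k z := by
    filter_upwards [hfac.eventually_nhds, hu.eventually_analyticAt] with z hz huz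
    have hd : HasDerivAt (fun z ↦ h z₀ + (z - z₀) ^ m * u z)
        (m * (z - z₀) ^ (m - 1) * 1 * u z + (z - z₀) ^ m * deriv u z) z :=
      ((((hasDerivAt_id z).sub_const z₀).pow m).mul huz.differentiableAt.hasDerivAt).const_add _
    have he : h =ᶠ[𝓝 z] fun z ↦ h z₀ + (z - z₀) ^ m * u z := by
      filter_upwards [hz] with y hy
      rw [← hy]; ring
    rw [(hd.congr_of_eventuallyEq he).deriv]
    obtain ⟨n, rfl⟩ : ∃ n, m = n + 1 := ⟨m - 1, by omega⟩
    simp only [k, Nat.add_sub_cancel, pow_succ]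
    ring
  let c := ‖u z₀‖ / 2
  have hc : 0 < c := half_pos (norm_pos_iff.2 hu0)
  let C := ‖k z₀‖ + 1
  have hC : 0 < C := by positivity
  let ε := (1 - ‖a z₀‖) * c / (2 * C)
  have hε : 0 < ε := div_pos (mul_pos (sub_pos.2 hlt) hc) (by positivity)
  have hεC : ε * C < (1 - ‖a z₀‖) * c := by
    have : ε * C = (1 - ‖a z₀‖) * c / 2 := by simp only [ε]; field_simp
    rw [this]
    exact half_lt_self (mul_pos (sub_pos.2 hlt) hc)
  have hkC : ∀ᶠ z in 𝓝 z₀, ‖k z‖ < C := hk.norm.eventually_lt_const (lt_add_one _)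
  have huc : ∀ᶠ z in 𝓝 z₀, c < ‖u z‖ :=
    hu.continuousAt.norm.eventually_const_lt (half_lt_self (norm_pos_iff.2 hu0))
  have haε : ∀ᶠ z in 𝓝 z₀, ‖a z - a z₀‖ < ε := by
    have : ContinuousAt (fun z ↦ ‖a z - a z₀‖) z₀ := (ha.sub continuousAt_const).norm
    exact this.eventually_lt_const (by simpa using hε)
  obtain ⟨ρ, hρ, hall⟩ := Metric.eventually_nhds_iff_ball.1 (hfac.and (hdh.and (hder.and
    (hkC.and (huc.and (haε.and (hu.eventually_analyticAt.and
      (hh.eventually_analyticAt.and hg.eventually_analyticAt))))))))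
  have hG : ∀ z ∈ Metric.ball z₀ ρ, z ≠ z₀ → ‖g z - g z₀‖ < ‖h z - h z₀‖ := by
    intro z hz hzz
    set d := ‖z - z₀‖ with hd
    have hd0 : 0 < d := norm_pos_iff.2 (sub_ne_zero.2 hzz)
    have hsub : Metric.closedBall z₀ d ⊆ Metric.ball z₀ ρ :=
      Metric.closedBall_subset_ball (by simpa [hd, dist_eq_norm] using hz)
    have hmv := (convex_closedBall z₀ d).norm_image_sub_le_of_norm_deriv_le
      (f := fun w ↦ g w - a z₀ * h w) (C := ε * (d ^ (m - 1) * C)) (x := z₀) (y := z) (𝕜 := ℂ)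
      (fun w hw ↦ by
        obtain ⟨-, -, -, -, -, -, -, hhw, hgw⟩ := hall w (hsub hw)
        exact hgw.differentiableAt.sub (hhw.differentiableAt.const_mul _))
      (fun w hw ↦ by
        obtain ⟨-, h2, h3, h4, -, h6, -, hhw, hgw⟩ := hall w (hsub hw)
        have hwd : ‖w - z₀‖ ≤ d := by simpa [dist_eq_norm] using hw
        have : deriv (fun w ↦ g w - a z₀ * h w) w = (a w - a z₀) * deriv h w := by
          rw [deriv_fun_sub hgw.differentiableAt (hhw.differentiableAt.const_mul _),
            deriv_const_mul _ hhw.differentiableAt, h3]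
          ring
        rw [this, h2, norm_mul, norm_mul, norm_pow]
        gcongr)
      (Metric.mem_closedBall_self hd0.le) (by simp [dist_eq_norm, hd])
    obtain ⟨h1, -, -, -, h5, -⟩ := hall z hz
    have hH : ‖h z - h z₀‖ = d ^ m * ‖u z‖ := by rw [h1, norm_mul, norm_pow]
    have hpow : ε * (d ^ (m - 1) * C) * d = ε * C * d ^ m := by
      obtain ⟨n, rfl⟩ : ∃ n, m = n + 1 := ⟨m - 1, by omega⟩
      simp only [Nat.add_sub_cancel, pow_succ]
      ring
    rw [← hd, hpow] at hmv
    have hsplit : g z - g z₀ =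
        a z₀ * (h z - h z₀) + ((g z - a z₀ * h z) - (g z₀ - a z₀ * h z₀)) := by ring
    calc ‖g z - g z₀‖ ≤ ‖a z₀‖ * ‖h z - h z₀‖ + ε * C * d ^ m := by
          rw [hsplit, ← norm_mul]
          exact (norm_add_le _ _).trans (by gcongr)
      _ < ‖a z₀‖ * ‖h z - h z₀‖ + (1 - ‖a z₀‖) * c * d ^ m := by gcongr
      _ ≤ ‖a z₀‖ * ‖h z - h z₀‖ + (1 - ‖a z₀‖) * ‖u z‖ * d ^ m := by
          have := sub_nonneg.2 hlt.le
          gcongr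
      _ = ‖h z - h z₀‖ := by rw [hH]; ring
  filter_upwards [Ioo_mem_nhdsGT hρ] with r hr
  have hmem : ∀ t : ℝ, z₀ + r * Complex.exp (t * Complex.I) ∈ Metric.ball z₀ ρ := fun t ↦ by
    rw [mem_ball_iff_norm, add_sub_cancel_left, norm_ofReal_mul_exp_mul_I hr.1.le]
    exact hr.2
  have hmain : HasWinding (fun t ↦ ((r : ℂ) * Complex.exp (t * Complex.I)) ^ m *
      u (z₀ + r * Complex.exp (t * Complex.I))) m := by
    have hsub : Metric.closedBall z₀ r ⊆ Metric.ball z₀ ρ := Metric.closedBall_subset_ball hr.2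
    simpa using (hasWinding_circle m (Complex.ofReal_ne_zero.2 hr.1.ne')).mul
      (hasWinding_zero_of_ne_zero hr.1.le
        (fun z hz ↦ (hall z (hsub hz)).2.2.2.2.2.2.1.continuousAt.continuousWithinAt)
        (fun z hz ↦ norm_pos_iff.1 (hc.trans (hall z (hsub hz)).2.2.2.2.1)))
  refine hmain.of_norm_sub_lt ?_ (by simp [Complex.exp_two_pi_mul_I]) fun t ↦ ?_
  · have hcont : ContinuousOn (fun z ↦ h z + (starRingEnd ℂ) (g z)) (Metric.ball z₀ ρ) :=
      fun z hz ↦ ((hall z hz).2.2.2.2.2.2.2.1.continuousAt.add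
        (Complex.continuous_conj.continuousAt.comp
          (hall z hz).2.2.2.2.2.2.2.2.continuousAt)).continuousWithinAt
    exact (hcont.comp_continuous (by fun_prop) hmem).sub continuous_const
  · have h1 := (hall _ (hmem t)).1
    rw [add_sub_cancel_left] at h1
    rw [← h1]
    have hne' : z₀ + r * Complex.exp (t * Complex.I) ≠ z₀ := by
      simp [hr.1.ne', Complex.exp_ne_zero]
    convert hG _ (hmem t) hne' using 1
    rw [← Complex.norm_conj (g _ - g z₀), map_sub]
    congr 1
    ring

open Topology in
/-- If `‖G‖ ≤ ‖H‖` near `z₀`, then the quotient `G / H` extends analytically to `z₀`. -/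
theorem exists_analyticAt_eq_mul_of_norm_le {G H : ℂ → ℂ} {z₀ : ℂ} (hG : AnalyticAt ℂ G z₀)
    (hH : AnalyticAt ℂ H z₀) (hne : ¬ ∀ᶠ z in 𝓝 z₀, H z = 0)
    (hle : ∀ᶠ z in 𝓝 z₀, ‖G z‖ ≤ ‖H z‖) :
    ∃ a : ℂ → ℂ, AnalyticAt ℂ a z₀ ∧ (∀ᶠ z in 𝓝 z₀, G z = a z * H z) ∧
      ∀ᶠ z in 𝓝[≠] z₀, ‖a z‖ ≤ 1 := by
  obtain ⟨j, u, hu, hu0, hHu⟩ := hH.exists_eventuallyEq_pow_smul_nonzero_iff.2 hne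
  by_cases hG0 : ∀ᶠ z in 𝓝 z₀, G z = 0
  · exact ⟨0, analyticAt_const, by simpa using hG0, by simp⟩
  obtain ⟨p, v, hv, hv0, hGv⟩ := hG.exists_eventuallyEq_pow_smul_nonzero_iff.2 hG0
  have hjp : j ≤ p := by
    by_contra! hpj
    refine hv0 (norm_le_zero_iff.1 ?_)
    have hlim : Tendsto (fun z ↦ ‖z - z₀‖ ^ (j - p) * ‖u z‖) (𝓝[≠] z₀) (𝓝 0) := by
      have : ContinuousAt (fun z ↦ ‖z - z₀‖ ^ (j - p) * ‖u z‖) z₀ := by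
        have := hu.continuousAt
        fun_prop
      have h0 := this.tendsto.mono_left (nhdsWithin_le_nhds (s := {z₀}ᶜ))
      simpa [show j - p ≠ 0 by omega] using h0
    refine le_of_tendsto_of_tendsto
      (hv.continuousAt.norm.tendsto.mono_left nhdsWithin_le_nhds) hlim ?_
    filter_upwards [nhdsWithin_le_nhds hGv, nhdsWithin_le_nhds hHu, nhdsWithin_le_nhds hle,
      self_mem_nhdsWithin] with z h1 h2 h3 h4
    have hpos : 0 < ‖z - z₀‖ := norm_pos_iff.2 (sub_ne_zero.2 h4)
    rw [h1, h2, norm_smul, norm_smul, norm_pow, norm_pow,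
      show j = p + (j - p) by omega, pow_add, mul_assoc] at h3
    simpa using le_of_mul_le_mul_left h3 (pow_pos hpos p)
  have hu_ne : ∀ᶠ z in 𝓝 z₀, u z ≠ 0 := hu.continuousAt.eventually_ne hu0
  have heq : ∀ᶠ z in 𝓝 z₀, G z = ((z - z₀) ^ (p - j) * v z / u z) * H z := by
    filter_upwards [hGv, hHu, hu_ne] with z h1 h2 h3
    rw [h1, h2]
    obtain ⟨n, rfl⟩ := Nat.exists_eq_add_of_le hjp
    simp only [smul_eq_mul, Nat.add_sub_cancel_left, pow_add]
    field_simp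
  refine ⟨fun z ↦ (z - z₀) ^ (p - j) * v z / u z, by fun_prop (disch := assumption), heq, ?_⟩
  filter_upwards [nhdsWithin_le_nhds heq, nhdsWithin_le_nhds hle, nhdsWithin_le_nhds hHu,
    nhdsWithin_le_nhds hu_ne, self_mem_nhdsWithin] with z h1 h2 h3 h4 h5
  have hHz : H z ≠ 0 := by
    rw [h3]
    exact smul_ne_zero (pow_ne_zero _ (sub_ne_zero.2 h5)) h4
  rw [h1, norm_mul] at h2
  exact le_of_mul_le_mul_right (by simpa using h2) (norm_pos_iff.2 hHz)

open Topology in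
/-- An injective harmonic map of the unit disk is either sense preserving or sense reversing. -/
theorem norm_deriv_le_or_ge_of_injOn {h g : ℂ → ℂ}
    (hh : DifferentiableOn ℂ h (Metric.ball 0 1)) (hg : DifferentiableOn ℂ g (Metric.ball 0 1))
    (hinj : InjOn (fun z ↦ h z + (starRingEnd ℂ) (g z)) (Metric.ball 0 1)) :
    (∀ z ∈ Metric.ball (0 : ℂ) 1, ‖deriv g z‖ ≤ ‖deriv h z‖) ∨
      ∀ z ∈ Metric.ball (0 : ℂ) 1, ‖deriv h z‖ ≤ ‖deriv g z‖ := by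
  by_contra! hcon
  obtain ⟨⟨z₁, hz₁, hlt₁⟩, z₀, hz₀, hlt₀⟩ := hcon
  have hpos : ∀ {h g : ℂ → ℂ}, DifferentiableOn ℂ h (Metric.ball 0 1) →
      DifferentiableOn ℂ g (Metric.ball 0 1) → ∀ z ∈ Metric.ball (0 : ℂ) 1,
      ‖deriv g z‖ < ‖deriv h z‖ → ∃ m : ℕ, 0 < m ∧ ∃ r : ℝ, 0 < r ∧ ‖z‖ + r < 1 ∧ HasWinding
        (fun t ↦ (h (z + r * Complex.exp (t * Complex.I)) +
        (starRingEnd ℂ) (g (z + r * Complex.exp (t * Complex.I)))) -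
        (h z + (starRingEnd ℂ) (g z))) m := by
    intro h g hh hg z hz hlt
    have hha := hh.analyticAt (Metric.isOpen_ball.mem_nhds hz)
    have hga := hg.analyticAt (Metric.isOpen_ball.mem_nhds hz)
    have h0 : deriv h z ≠ 0 := norm_pos_iff.1 ((norm_nonneg _).trans_lt hlt)
    obtain ⟨m, hm, hr⟩ := exists_hasWinding_of_dilatation (a := fun z ↦ deriv g z / deriv h z)
      hha hga
      (fun hc ↦ h0 (by rw [EventuallyEq.deriv_eq (f := fun _ ↦ h z) hc, deriv_const]))
      (hga.deriv.continuousAt.div hha.deriv.continuousAt h0)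
      (by rw [norm_div]; exact (div_lt_one ((norm_nonneg _).trans_lt hlt)).2 hlt)
      (by
        filter_upwards [hha.deriv.continuousAt.eventually_ne h0] with w hw
        rw [div_mul_cancel₀ _ hw])
    have hz1 : 0 < 1 - ‖z‖ := by simpa using hz
    obtain ⟨r, hr, hr'⟩ := (hr.and (Ioo_mem_nhdsGT hz1)).exists
    exact ⟨m, hm, r, hr'.1, by linarith [hr'.2], hr⟩
  obtain ⟨m₀, hm₀, r₀, hr₀, hzr₀, hw₀⟩ := hpos hh hg z₀ hz₀ hlt₀
  obtain ⟨m₁, hm₁, r₁, hr₁, hzr₁, hw₁⟩ := hpos hg hh z₁ hz₁ hlt₁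
  let f : ℂ → ℂ := fun z ↦ h z + (starRingEnd ℂ) (g z)
  have hf : ContinuousOn f (Metric.ball 0 1) :=
    hh.continuousOn.add (Complex.continuous_conj.comp_continuousOn hg.continuousOn)
  let ζ : ℝ → ℂ := fun s ↦ (1 - s : ℝ) * z₀ + (s : ℝ) * z₁
  let ρ : ℝ → ℝ := fun s ↦ (1 - s) * r₀ + s * r₁
  have hρ : ∀ s ∈ Icc (0 : ℝ) 1, 0 < ρ s := fun s hs ↦ by
    rcases hs.1.eq_or_lt with rfl | hs0
    · simpa [ρ] using hr₀
    · have := sub_nonneg.2 hs.2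
      positivity
  have hζρ : ∀ s ∈ Icc (0 : ℝ) 1, ‖ζ s‖ + ρ s < 1 := fun s hs ↦ by
    have h1 := sub_nonneg.2 hs.2
    have hn : ‖ζ s‖ ≤ (1 - s) * ‖z₀‖ + s * ‖z₁‖ := by
      refine (norm_add_le _ _).trans_eq ?_
      rw [norm_mul, norm_mul, Complex.norm_real, Complex.norm_real, Real.norm_of_nonneg h1,
        Real.norm_of_nonneg hs.1]
    have h2 : (1 - s) * (‖z₀‖ + r₀) + s * (‖z₁‖ + r₁) < 1 :=
      (convex_Iio (1 : ℝ)) (show _ from hzr₀) (show _ from hzr₁) h1 hs.1 (by ring)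
    simp only [ρ]
    linarith
  have hmem : ∀ s ∈ Icc (0 : ℝ) 1, ∀ t : ℝ,
      ζ s + ρ s * Complex.exp (t * Complex.I) ∈ Metric.ball (0 : ℂ) 1 := fun s hs t ↦ by
    rw [mem_ball_zero_iff]
    refine (norm_add_le _ _).trans_lt ?_
    rw [norm_ofReal_mul_exp_mul_I (hρ s hs).le]
    exact hζρ s hs
  have hmem' : ∀ s ∈ Icc (0 : ℝ) 1, ζ s ∈ Metric.ball (0 : ℂ) 1 := fun s hs ↦ by
    rw [mem_ball_zero_iff]
    linarith [hζρ s hs, hρ s hs]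
  obtain ⟨k, hk⟩ := exists_hasWinding_homotopy
    (H := fun s t ↦ f (ζ s + ρ s * Complex.exp (t * Complex.I)) - f (ζ s))
    ((hf.comp (f := fun x : ℝ × ℝ ↦ ζ x.1 + ρ x.1 * Complex.exp (x.2 * Complex.I)) (by fun_prop)
      fun x hx ↦ hmem x.1 hx.1 x.2).sub
      (hf.comp (f := fun x : ℝ × ℝ ↦ ζ x.1) (by fun_prop) fun x hx ↦ hmem' x.1 hx.1))
    (fun s hs t h0 ↦ by
      have := hinj (hmem s hs t) (hmem' s hs) (sub_eq_zero.1 h0)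
      simp [(hρ s hs).ne', Complex.exp_ne_zero] at this)
    (fun s _ ↦ by simp [Complex.exp_two_pi_mul_I])
  have e₀ : k = m₀ := HasWinding.unique (by simpa [ζ, ρ] using hk 0 (by simp)) hw₀
  have e₁ : k = -m₁ := HasWinding.unique (by simpa [ζ, ρ] using hk 1 (by simp)) (by
    simpa [add_comm] using hw₁.conj)
  omega

/-- The image of `h + conj g` lies on a line if `g' = λ h'` with `‖λ‖ = 1`. -/
theorem exists_line_of_deriv_eq_mul {h g : ℂ → ℂ} {l : ℂ} (hl : ‖l‖ = 1)
    (hh : DifferentiableOn ℂ h (Metric.ball 0 1)) (hg : DifferentiableOn ℂ g (Metric.ball 0 1))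
    (hd : ∀ z ∈ Metric.ball (0 : ℂ) 1, deriv g z = l * deriv h z) :
    ∃ p q : ℂ, ∀ z ∈ Metric.ball (0 : ℂ) 1, ∃ t : ℝ,
      h z + (starRingEnd ℂ) (g z) = p + (t : ℂ) * q := by
  obtain ⟨n, hn⟩ := IsAlgClosed.exists_pow_nat_eq ((starRingEnd ℂ) l) (n := 2) two_pos
  have hn1 : ‖n‖ = 1 := by
    have : ‖n‖ ^ 2 = 1 := by rw [← norm_pow, hn, Complex.norm_conj, hl]
    exact (pow_eq_one_iff_of_nonneg (norm_nonneg _) two_ne_zero).1 this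
  have hnn : n * (starRingEnd ℂ) n = 1 := by
    rw [Complex.mul_conj, Complex.normSq_eq_norm_sq, hn1]; simp
  have hconst : ∀ z ∈ Metric.ball (0 : ℂ) 1, g z - l * h z = g 0 - l * h 0 := fun z hz ↦ by
    refine (Metric.isOpen_ball.is_const_of_deriv_eq_zero (convex_ball 0 1).isPreconnected
      (hg.sub (hh.const_mul l)) (fun w hw ↦ ?_) hz (Metric.mem_ball_self one_pos))
    have hw' := Metric.isOpen_ball.mem_nhds hw
    have h1 := hh.differentiableAt hw'
    have h2 := hg.differentiableAt hw'
    change deriv (fun y ↦ g y - l * h y) w = 0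
    rw [deriv_fun_sub h2 (h1.const_mul l), deriv_const_mul l h1, hd w hw, sub_self]
  refine ⟨(starRingEnd ℂ) (g 0 - l * h 0), n, fun z hz ↦
    ⟨2 * ((starRingEnd ℂ) n * h z).re, ?_⟩⟩
  have hgz : g z = l * h z + (g 0 - l * h 0) := by rw [← hconst z hz]; ring
  have hre : ((2 * ((starRingEnd ℂ) n * h z).re : ℝ) : ℂ) =
      (starRingEnd ℂ) n * h z + n * (starRingEnd ℂ) (h z) := by
    rw [← Complex.add_conj]; simp
  rw [hre, hgz, map_add, map_mul, ← hn]
  linear_combination (-h z) * hnn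

open Topology in
/-- Small circles around any point have positive winding number under a limit of sense-preserving
harmonic maps whose image lies on no line. -/
theorem exists_hasWinding_of_norm_deriv_le {h g : ℂ → ℂ}
    (hh : DifferentiableOn ℂ h (Metric.ball 0 1)) (hg : DifferentiableOn ℂ g (Metric.ball 0 1))
    (hle : ∀ z ∈ Metric.ball (0 : ℂ) 1, ‖deriv g z‖ ≤ ‖deriv h z‖)
    (hnl : ¬ ∃ p q : ℂ, ∀ z ∈ Metric.ball (0 : ℂ) 1, ∃ t : ℝ,
      h z + (starRingEnd ℂ) (g z) = p + (t : ℂ) * q) {z₀ : ℂ} (hz₀ : z₀ ∈ Metric.ball 0 1) :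
    ∃ m : ℕ, 0 < m ∧ ∀ᶠ r : ℝ in 𝓝[>] 0, HasWinding
      (fun t ↦ (h (z₀ + r * Complex.exp (t * Complex.I)) +
        (starRingEnd ℂ) (g (z₀ + r * Complex.exp (t * Complex.I)))) -
        (h z₀ + (starRingEnd ℂ) (g z₀))) m := by
  have hnhds := Metric.isOpen_ball.mem_nhds hz₀
  have hha := hh.analyticOnNhd Metric.isOpen_ball
  have hga := hg.analyticOnNhd Metric.isOpen_ball
  have hline : ∀ l : ℂ, ‖l‖ = 1 → ¬ ∀ᶠ z in 𝓝 z₀, deriv g z = l * deriv h z := fun l hl hev ↦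
    hnl <| exists_line_of_deriv_eq_mul hl hh hg <|
      hga.deriv.eqOn_of_preconnected_of_eventuallyEq (analyticOnNhd_const.mul hha.deriv)
        (convex_ball 0 1).isPreconnected hz₀ hev
  have hle' : ∀ᶠ z in 𝓝 z₀, ‖deriv g z‖ ≤ ‖deriv h z‖ := by
    filter_upwards [hnhds] with z hz using hle z hz
  have hne : ¬ ∀ᶠ z in 𝓝 z₀, deriv h z = 0 := fun h0 ↦ by
    refine hline 1 (by simp) ?_
    filter_upwards [h0, hle'] with z h1 h2
    rw [h1, norm_zero] at h2
    simpa [h1] using h2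
  obtain ⟨a, ha, hder, ha1⟩ := exists_analyticAt_eq_mul_of_norm_le (hga z₀ hz₀).deriv
    (hha z₀ hz₀).deriv hne hle'
  have ha0 : ‖a z₀‖ ≤ 1 :=
    le_of_tendsto (ha.continuousAt.norm.tendsto.mono_left nhdsWithin_le_nhds) ha1
  refine exists_hasWinding_of_dilatation (hha z₀ hz₀) (hga z₀ hz₀) (fun hc ↦ hne ?_)
    ha.continuousAt (ha0.lt_of_ne fun h1 ↦ ?_) hder
  · filter_upwards [hc.eventually_nhds] with z hz
    rw [EventuallyEq.deriv_eq (f := fun _ ↦ h z₀) hz, deriv_const]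
  · have hmax : IsLocalMax (norm ∘ a) z₀ := by
      rw [eventually_nhdsWithin_iff] at ha1
      filter_upwards [ha1] with z hz
      rcases eq_or_ne z z₀ with rfl | hzz
      · exact le_rfl
      · exact (hz hzz).trans h1.ge
    have hconst := Complex.eventually_eq_of_isLocalMax_norm
      (ha.eventually_analyticAt.mono fun z hz ↦ hz.differentiableAt) hmax
    refine hline (a z₀) h1 ?_
    filter_upwards [hconst, hder] with z h2 h3
    rw [h3, h2]

open Topology in
/-- A locally uniform limit of injective harmonic maps, infinitely many of which are sense
preserving, is injective unless its image lies on a line. -/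
theorem injOn_of_tendstoLocallyUniformlyOn {hn gn : ℕ → ℂ → ℂ} {h g : ℂ → ℂ}
    (hhn : ∀ n, DifferentiableOn ℂ (hn n) (Metric.ball 0 1))
    (hgn : ∀ n, DifferentiableOn ℂ (gn n) (Metric.ball 0 1))
    (hh : TendstoLocallyUniformlyOn hn h atTop (Metric.ball 0 1))
    (hg : TendstoLocallyUniformlyOn gn g atTop (Metric.ball 0 1))
    (hinj : ∀ n, InjOn (fun z ↦ hn n z + (starRingEnd ℂ) (gn n z)) (Metric.ball 0 1))
    (hfreq : ∃ᶠ n in atTop, ∀ z ∈ Metric.ball (0 : ℂ) 1, ‖deriv (gn n) z‖ ≤ ‖deriv (hn n) z‖)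
    (hnl : ¬ ∃ p q : ℂ, ∀ z ∈ Metric.ball (0 : ℂ) 1, ∃ t : ℝ,
      h z + (starRingEnd ℂ) (g z) = p + (t : ℂ) * q) :
    InjOn (fun z ↦ h z + (starRingEnd ℂ) (g z)) (Metric.ball 0 1) := by
  have hhd := hh.differentiableOn (Eventually.of_forall hhn) Metric.isOpen_ball
  have hgd := hg.differentiableOn (Eventually.of_forall hgn) Metric.isOpen_ball
  have hle : ∀ z ∈ Metric.ball (0 : ℂ) 1, ‖deriv g z‖ ≤ ‖deriv h z‖ := fun z hz ↦
    le_of_tendsto_of_tendsto_of_frequently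
      ((hg.deriv (Eventually.of_forall hgn) Metric.isOpen_ball).tendsto_at hz).norm
      ((hh.deriv (Eventually.of_forall hhn) Metric.isOpen_ball).tendsto_at hz).norm
      (hfreq.mono fun n hn ↦ hn z hz)
  let f : ℂ → ℂ := fun z ↦ h z + (starRingEnd ℂ) (g z)
  let fn : ℕ → ℂ → ℂ := fun n z ↦ hn n z + (starRingEnd ℂ) (gn n z)
  have hf : ContinuousOn f (Metric.ball 0 1) :=
    hhd.continuousOn.add (Complex.continuous_conj.comp_continuousOn hgd.continuousOn)
  have hfn : ∀ n, ContinuousOn (fn n) (Metric.ball 0 1) := fun n ↦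
    (hhn n).continuousOn.add (Complex.continuous_conj.comp_continuousOn (hgn n).continuousOn)
  have hconv : TendstoLocallyUniformlyOn fn f atTop (Metric.ball 0 1) :=
    hh.add (Complex.conjLIE.isometry.uniformContinuous.comp_tendstoLocallyUniformlyOn hg)
  -- near every point, `fn n` attains the value of `f` for all large `n`
  have hzero : ∀ z₀ ∈ Metric.ball (0 : ℂ) 1, ∀ᶠ r : ℝ in 𝓝[>] 0, ∀ᶠ n in atTop,
      ∃ z ∈ Metric.closedBall z₀ r ∩ Metric.ball 0 1, fn n z = f z₀ := by
    intro z₀ hz₀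
    obtain ⟨m, hm, hw⟩ := exists_hasWinding_of_norm_deriv_le hhd hgd hle hnl hz₀
    have hz1 : 0 < 1 - ‖z₀‖ := by simpa using hz₀
    filter_upwards [hw, Ioo_mem_nhdsGT hz1] with r hwr hr
    have hsub : Metric.closedBall z₀ r ⊆ Metric.ball 0 1 := by
      refine Metric.closedBall_subset_ball' ?_
      rw [dist_zero_right]
      linarith [hr.2]
    have hsphere : ∀ t : ℝ, z₀ + r * Complex.exp (t * Complex.I) ∈ Metric.sphere z₀ r := fun t ↦ by
      rw [mem_sphere_iff_norm, add_sub_cancel_left, norm_ofReal_mul_exp_mul_I hr.1.le]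
    have hsub' : Metric.sphere z₀ r ⊆ Metric.ball 0 1 := Metric.sphere_subset_closedBall.trans hsub
    obtain ⟨z₁, hz₁, hmin⟩ := (isCompact_sphere z₀ r).exists_isMinOn ⟨_, hsphere 0⟩
      ((hf.mono hsub').sub (continuousOn_const (c := f z₀))).norm
    have hz₁0 : 0 < ‖f z₁ - f z₀‖ := by
      rw [norm_pos_iff]
      obtain ⟨t, rfl⟩ : z₁ ∈ range (circleMap z₀ r) := by
        rwa [range_circleMap, abs_of_pos hr.1]
      obtain ⟨θ, -, he, -⟩ := hwr
      exact fun h0 ↦ Complex.exp_ne_zero _ ((he t).trans h0)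
    have hunif := (tendstoLocallyUniformlyOn_iff_forall_isCompact Metric.isOpen_ball).1 hconv _
      hsub' (isCompact_sphere z₀ r)
    filter_upwards [Metric.tendstoUniformlyOn_iff.1 hunif _ hz₁0] with n hn
    by_contra! hno
    have hwn : HasWinding (fun t ↦ fn n (z₀ + r * Complex.exp (t * Complex.I)) - f z₀) m := by
      refine hwr.of_norm_sub_lt ?_ (by simp [Complex.exp_two_pi_mul_I]) fun t ↦ ?_
      · exact ((hfn n).comp_continuous (by fun_prop) fun t ↦ hsub' (hsphere t)).sub continuous_const
      · have h1 := hn _ (hsphere t)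
        have h2 : ‖f z₁ - f z₀‖ ≤ ‖f (z₀ + r * Complex.exp (t * Complex.I)) - f z₀‖ :=
          hmin (hsphere t)
        rw [dist_comm, dist_eq_norm] at h1
        refine lt_of_eq_of_lt ?_ (h1.trans_le h2)
        congr 1
        simp only [f]
        ring
    have hw0 := hasWinding_zero_of_ne_zero (f := fun z ↦ fn n z - f z₀) hr.1.le
      (((hfn n).mono hsub).sub continuousOn_const)
      fun z hz ↦ sub_ne_zero.2 (hno z ⟨hz, hsub hz⟩)
    have := hwn.unique hw0
    omega
  intro z₁ hz₁ z₂ hz₂ heq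
  by_contra hne
  have hd : 0 < dist z₁ z₂ / 2 := half_pos (dist_pos.2 hne)
  obtain ⟨r, h1, h2, hr⟩ :=
    ((hzero z₁ hz₁).and ((hzero z₂ hz₂).and (Ioo_mem_nhdsGT hd))).exists
  obtain ⟨n, ⟨x, hx, hfx⟩, y, hy, hfy⟩ := (h1.and h2).exists
  have hxy : x = y := hinj n hx.2 hy.2 (hfx.trans (heq.trans hfy.symm))
  subst hxy
  have := dist_triangle_left z₁ z₂ x
  linarith [Metric.mem_closedBall.1 hx.1, Metric.mem_closedBall.1 hy.1, hr.2]

open InnerProductSpace in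
/-- A locally convergent sequence of harmonic maps on the unit disk can be decomposed as
`h + conj g` with convergent holomorphic parts. -/
theorem exists_holomorphic_decomposition {fn : ℕ → ℂ → ℂ} {f : ℂ → ℂ}
    (hfn : ∀ n, HarmonicOnNhd (fn n) (Metric.ball 0 1))
    (hf : TendstoLocallyUniformlyOn fn f atTop (Metric.ball 0 1)) :
    ∃ (hn gn : ℕ → ℂ → ℂ) (h g : ℂ → ℂ),
      (∀ n, DifferentiableOn ℂ (hn n) (Metric.ball 0 1)) ∧
      (∀ n, DifferentiableOn ℂ (gn n) (Metric.ball 0 1)) ∧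
      TendstoLocallyUniformlyOn hn h atTop (Metric.ball 0 1) ∧
      TendstoLocallyUniformlyOn gn g atTop (Metric.ball 0 1) ∧
      (∀ n, EqOn (fn n) (fun z ↦ hn n z + (starRingEnd ℂ) (gn n z)) (Metric.ball 0 1)) ∧
      EqOn f (fun z ↦ h z + (starRingEnd ℂ) (g z)) (Metric.ball 0 1) := by
  choose A hA hA0 hAre using fun n ↦ exists_differentiableOn_re_eq
    (v := fun z ↦ (fn n z).re) (fun z hz ↦ (hfn n z hz).comp_CLM (l := Complex.reCLM))
  choose B hB hB0 hBre using fun n ↦ exists_differentiableOn_re_eq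
    (v := fun z ↦ (fn n z).im) (fun z hz ↦ (hfn n z hz).comp_CLM (l := Complex.imCLM))
  obtain ⟨A', hA'⟩ := exists_tendstoLocallyUniformlyOn_of_re (v := fun z ↦ (f z).re) hA hA0
    ((Complex.reCLM.uniformContinuous.comp_tendstoLocallyUniformlyOn hf).congr
      fun n z hz ↦ (hAre n z hz).symm)
  obtain ⟨B', hB'⟩ := exists_tendstoLocallyUniformlyOn_of_re (v := fun z ↦ (f z).im) hB hB0
    ((Complex.imCLM.uniformContinuous.comp_tendstoLocallyUniformlyOn hf).congr
      fun n z hz ↦ (hBre n z hz).symm)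
  have hlin : ∀ c : ℂ, UniformContinuous fun p : ℂ × ℂ ↦ (p.1 + c * p.2) / 2 := fun c ↦ by
    convert ((2⁻¹ : ℂ) • (ContinuousLinearMap.fst ℂ ℂ ℂ +
      c • ContinuousLinearMap.snd ℂ ℂ ℂ)).uniformContinuous using 2 with p
    simp [div_eq_inv_mul, mul_add]
  have hcomb : ∀ c : ℂ, TendstoLocallyUniformlyOn (fun n z ↦ (A n z + c * B n z) / 2)
      (fun z ↦ (A' z + c * B' z) / 2) atTop (Metric.ball 0 1) := fun c ↦
    (hlin c).comp_tendstoLocallyUniformlyOn (hA'.prodMk hB')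
  have hsum : ∀ a b w : ℂ, a.re = w.re → b.re = w.im →
      w = (a + Complex.I * b) / 2 + (starRingEnd ℂ) ((a + -Complex.I * b) / 2) := by
    intro a b w ha hb
    apply Complex.ext <;> simp [Complex.div_re, Complex.div_im, ha, hb] <;> ring
  refine ⟨_, _, _, _, fun n ↦ ?_, fun n ↦ ?_, hcomb Complex.I, hcomb (-Complex.I),
    fun n z hz ↦ hsum _ _ _ (hAre n z hz) (hBre n z hz), fun z hz ↦ hsum _ _ _ ?_ ?_⟩
  · exact ((hA n).add ((hB n).const_mul _)).div_const _
  · exact ((hA n).add ((hB n).const_mul _)).div_const _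
  · refine tendsto_nhds_unique
      ((Complex.continuous_re.tendsto _).comp (hA'.tendsto_at hz)) ?_
    simpa [Function.comp_def, hAre _ z hz] using
      (Complex.continuous_re.tendsto _).comp (hf.tendsto_at hz)
  · refine tendsto_nhds_unique
      ((Complex.continuous_re.tendsto _).comp (hB'.tendsto_at hz)) ?_
    simpa [Function.comp_def, hBre _ z hz] using
      (Complex.continuous_im.tendsto _).comp (hf.tendsto_at hz)

/-- Hengartner–Schober limit theorem applied to `w = P[F]`: a locally uniform limit of
univalent harmonic maps onto `D` which is nonconstant and whose image lies on no line
is univalent. -/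
theorem limit_univalent (D : Set ℂ) (hDo : IsOpen D) (hDb : Bornology.IsBounded D)
    (hDne : D.Nonempty) (hDc : IsConnected D)
    (F : ℝ → ℂ) (hF : Continuous F) (hFper : ∀ t, F (t + 2 * π) = F t)
    (hFsurj : F '' univ = frontier D)
    (wn : ℕ → ℂ → ℂ)
    (hharm : ∀ n, HarmonicOn (wn n) (Metric.ball 0 1))
    (huniv : ∀ n, Set.InjOn (wn n) (Metric.ball 0 1))
    (himg : ∀ n, wn n '' Metric.ball 0 1 = D)
    (hconv : TendstoLocallyUniformlyOn wn (poissonExt F) atTop (Metric.ball 0 1))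
    (hnc : ¬ ∃ c : ℂ, ∀ z ∈ Metric.ball (0:ℂ) 1, poissonExt F z = c)
    (hnl : ¬ ∃ p q : ℂ, ∀ z ∈ Metric.ball (0:ℂ) 1, ∃ t : ℝ, poissonExt F z = p + (t:ℂ) * q) :
    Set.InjOn (poissonExt F) (Metric.ball 0 1) := by
  obtain ⟨hn, gn, h, g, hhn, hgn, hh, hg, hwn, hw⟩ := exists_holomorphic_decomposition
    (fun n ↦ (hharm n).harmonicOnNhd Metric.isOpen_ball) hconv
  have hinj := fun n ↦ (huniv n).congr (hwn n)
  have hswap : ∀ a b : ℂ, b + (starRingEnd ℂ) a = (starRingEnd ℂ) (a + (starRingEnd ℂ) b) :=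
    fun a b ↦ by rw [map_add, Complex.conj_conj, add_comm]
  have hline : ¬ ∃ p q : ℂ, ∀ z ∈ Metric.ball (0 : ℂ) 1, ∃ t : ℝ,
      h z + (starRingEnd ℂ) (g z) = p + (t : ℂ) * q := by
    rintro ⟨p, q, hpq⟩
    exact hnl ⟨p, q, fun z hz ↦ (hpq z hz).imp fun t ht ↦ (hw hz).trans ht⟩
  refine InjOn.congr ?_ hw.symm
  rcases frequently_or_distrib.1 (Frequently.of_forall (f := atTop)
    fun n ↦ norm_deriv_le_or_ge_of_injOn (hhn n) (hgn n) (hinj n)) with hfreq | hfreq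
  · exact injOn_of_tendstoLocallyUniformlyOn hhn hgn hh hg hinj hfreq hline
  · have key := injOn_of_tendstoLocallyUniformlyOn hgn hhn hg hh
      (fun n x hx y hy hxy ↦ hinj n hx hy <| by
        simp only [hswap (hn n _)] at hxy
        exact (starRingEnd ℂ).injective hxy) hfreq (by
        rintro ⟨p, q, hpq⟩
        refine hline ⟨(starRingEnd ℂ) p, (starRingEnd ℂ) q, fun z hz ↦ ?_⟩
        obtain ⟨t, ht⟩ := hpq z hz
        refine ⟨t, ?_⟩
        rw [hswap (g z), ht]
        simp)
    intro x hx y hy hxy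
    refine key hx hy ?_
    simp only [hswap (h _)]
    exact congrArg _ hxy
end

section
/- Let F : 𝕋 → γ be an orientation-preserving C¹ diffeomorphism onto a simple closed curve γ = ∂D for a bounded domain D, and suppose w = P[F] extends to a C¹ map on the closed unit disk. If the boundary Jacobian satisfies J_w(ζ) > 0 for every ζ ∈ 𝕋, then w is a diffeomorphism of the open unit disk onto D. -/
open MeasureTheory Set Real Filter

/-- The Jacobian determinant of `w : ℂ → ℂ` viewed as a map `ℝ² → ℝ²`. -/
noncomputable def Jac (w : ℂ → ℂ) (z : ℂ) : ℝ :=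
  LinearMap.det (fderiv ℝ w z : ℂ →ₗ[ℝ] ℂ)

theorem exists_differentiable_add_conj_approx {g : ℝ → ℂ} (hg : Continuous g)
    (hper : ∀ t, g (t + 2 * π) = g t) {ε : ℝ} (hε : 0 < ε) :
    ∃ P Q : ℂ → ℂ, Differentiable ℂ P ∧ Differentiable ℂ Q ∧ ∀ t : ℝ,
      ‖g t - (P (circleMap 0 1 t) + (starRingEnd ℂ) (Q (circleMap 0 1 t)))‖ < ε := by
  have : Fact (0 < 2 * π) := ⟨Real.two_pi_pos⟩
  have hp : Function.Periodic g (2 * π) := hper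
  let G : C(AddCircle (2 * π), ℂ) := ⟨hp.lift, by
    exact continuous_coinduced_dom.mpr hg⟩
  have hG : G ∈ (Submodule.span ℂ (range <| @fourier (2 * π))).topologicalClosure := by
    rw [span_fourier_closure_eq_top]; trivial
  obtain ⟨f, hf, hfG⟩ := Metric.mem_closure_iff.1 hG ε hε
  have key : ∃ P Q : ℂ → ℂ, Differentiable ℂ P ∧ Differentiable ℂ Q ∧ ∀ t : ℝ,
      f (t : AddCircle (2 * π)) =
        P (circleMap 0 1 t) + (starRingEnd ℂ) (Q (circleMap 0 1 t)) := by
    refine Submodule.span_induction (p := fun f _ => ∃ P Q : ℂ → ℂ, Differentiable ℂ P ∧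
      Differentiable ℂ Q ∧ ∀ t : ℝ, f (t : AddCircle (2 * π)) =
        P (circleMap 0 1 t) + (starRingEnd ℂ) (Q (circleMap 0 1 t))) ?_ ?_ ?_ ?_ hf
    · rintro _ ⟨n, rfl⟩
      have hn : ∀ (n : ℕ) (t : ℝ), fourier (n : ℤ) (t : AddCircle (2 * π)) =
          (circleMap 0 1 t) ^ n := by
        intro n t
        rw [fourier_coe_apply, circleMap, Complex.ofReal_one, one_mul, zero_add,
          ← Complex.exp_nat_mul]
        congr 1
        push_cast
        field_simp
      rcases Int.eq_nat_or_neg n with ⟨m, rfl | rfl⟩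
      · exact ⟨fun z => z ^ m, fun _ => 0, by fun_prop, by fun_prop, fun t => by simp [hn]⟩
      · refine ⟨fun _ => 0, fun z => z ^ m, by fun_prop, by fun_prop, fun t => ?_⟩
        rw [fourier_neg, hn]; simp
    · exact ⟨fun _ => 0, fun _ => 0, by fun_prop, by fun_prop, by simp⟩
    · rintro a b - - ⟨P, Q, hP, hQ, h⟩ ⟨P', Q', hP', hQ', h'⟩
      refine ⟨P + P', Q + Q', hP.add hP', hQ.add hQ', fun t => ?_⟩
      simp [h, h']; ring
    · rintro c a - ⟨P, Q, hP, hQ, h⟩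
      refine ⟨fun z => c * P z, fun z => (starRingEnd ℂ) c * Q z, by fun_prop, by fun_prop,
        fun t => ?_⟩
      simp [h]; ring
  obtain ⟨P, Q, hP, hQ, h⟩ := key
  refine ⟨P, Q, hP, hQ, fun t => ?_⟩
  rw [← h, ← dist_eq_norm]
  exact (ContinuousMap.dist_apply_le_dist (f := G) (g := f) (t : AddCircle (2 * π))).trans_lt hfG

/-- A continuous `2π`-periodic real function is uniformly approximated on the circle by imaginary
parts of entire functions. -/
theorem exists_differentiable_im_approx {θ : ℝ → ℝ} (hθ : Continuous θ)
    (hper : ∀ t, θ (t + 2 * π) = θ t) {ε : ℝ} (hε : 0 < ε) :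
    ∃ P : ℂ → ℂ, Differentiable ℂ P ∧ ∀ t : ℝ, |θ t - (P (circleMap 0 1 t)).im| < ε := by
  obtain ⟨P, Q, hP, hQ, h⟩ := exists_differentiable_add_conj_approx
    (g := fun t => (θ t : ℂ)) (by fun_prop) (by simp [hper]) hε
  refine ⟨fun z => Complex.I * (P z + Q z), by fun_prop, fun t => ?_⟩
  refine lt_of_le_of_lt ?_ (h t)
  refine le_trans (le_of_eq ?_) (Complex.abs_re_le_norm _)
  simp

theorem poissonKer_eq_poissonKernel (z : ℂ) (t : ℝ) :
    poissonKer ‖z‖ (t - Complex.arg z) = (2 * π)⁻¹ * poissonKernel 0 z (circleMap 0 1 t) := by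
  have h : ‖circleMap 0 1 t - z‖ ^ 2 = 1 - 2 * ‖z‖ * Real.cos (t - Complex.arg z) + ‖z‖ ^ 2 := by
    have hre := Complex.norm_mul_cos_arg z
    have him := Complex.norm_mul_sin_arg z
    have hn := Complex.sq_norm z
    rw [Complex.sq_norm, Complex.normSq_apply, hn, Complex.normSq_apply, Real.cos_sub]
    simp only [circleMap, Complex.ofReal_one, one_mul, zero_add, Complex.sub_re, Complex.sub_im,
      Complex.exp_ofReal_mul_I_re, Complex.exp_ofReal_mul_I_im]
    linear_combination (Real.sin_sq_add_cos_sq t) + 2 * Real.cos t * hre + 2 * Real.sin t * him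
  rw [poissonKer, poissonKernel_def, sub_zero, sub_zero, h, norm_circleMap_zero]
  simp only [abs_one, one_pow]
  field_simp

theorem poissonExt_eq (F : ℝ → ℂ) (z : ℂ) :
    poissonExt F z =
      (2 * π)⁻¹ • ∫ t in (0 : ℝ)..2 * π, poissonKernel 0 z (circleMap 0 1 t) • F t := by
  rw [poissonExt, ← intervalIntegral.integral_smul]
  refine intervalIntegral.integral_congr fun t _ => ?_
  simp only [poissonKer_eq_poissonKernel, smul_smul]
  rfl

theorem continuous_poissonKernel_circleMap {z : ℂ} (hz : z ∈ Metric.ball (0 : ℂ) 1) :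
    Continuous fun t => poissonKernel 0 z (circleMap 0 1 t) := by
  simp only [poissonKernel_def, sub_zero]
  refine Continuous.div (by fun_prop) (by fun_prop) fun t => ?_
  have : circleMap 0 1 t ≠ z := fun h => by
    rw [mem_ball_zero_iff, ← h] at hz
    simp at hz
  simpa [sub_eq_zero] using this

theorem poissonKernel_circleMap_nonneg {z : ℂ} (hz : z ∈ Metric.ball (0 : ℂ) 1) (t : ℝ) :
    0 ≤ poissonKernel 0 z (circleMap 0 1 t) := by
  rw [poissonKernel_def]
  rw [mem_ball_zero_iff] at hz
  simp only [sub_zero, norm_circleMap_zero, abs_one, one_pow]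
  have : ‖z‖ ^ 2 ≤ 1 := pow_le_one₀ (norm_nonneg z) hz.le
  have : 0 ≤ 1 - ‖z‖ ^ 2 := by linarith
  positivity

theorem poissonExt_differentiable {P : ℂ → ℂ} (hP : Differentiable ℂ P) {z : ℂ}
    (hz : z ∈ Metric.ball (0 : ℂ) 1) : poissonExt (fun t => P (circleMap 0 1 t)) z = P z := by
  rw [poissonExt_eq]
  exact hP.diffContOnCl.circleAverage_poissonKernel_smul hz

theorem poissonExt_conj (F : ℝ → ℂ) (z : ℂ) :
    poissonExt (fun t => (starRingEnd ℂ) (F t)) z = (starRingEnd ℂ) (poissonExt F z) := by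
  rw [poissonExt, poissonExt, ← intervalIntegral.intervalIntegral_conj]
  simp

theorem intervalIntegrable_poissonKernel_smul {F : ℝ → ℂ} (hF : Continuous F) {z : ℂ}
    (hz : z ∈ Metric.ball (0 : ℂ) 1) :
    IntervalIntegrable (fun t => poissonKernel 0 z (circleMap 0 1 t) • F t) volume 0 (2 * π) :=
  ((continuous_poissonKernel_circleMap hz).smul hF).intervalIntegrable _ _

theorem poissonExt_add {F G : ℝ → ℂ} (hF : Continuous F) (hG : Continuous G) {z : ℂ}
    (hz : z ∈ Metric.ball (0 : ℂ) 1) :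
    poissonExt (fun t => F t + G t) z = poissonExt F z + poissonExt G z := by
  simp only [poissonExt_eq, smul_add]
  rw [intervalIntegral.integral_add (intervalIntegrable_poissonKernel_smul hF hz)
    (intervalIntegrable_poissonKernel_smul hG hz), smul_add]

theorem poissonExt_sub {F G : ℝ → ℂ} (hF : Continuous F) (hG : Continuous G) {z : ℂ}
    (hz : z ∈ Metric.ball (0 : ℂ) 1) :
    poissonExt (fun t => F t - G t) z = poissonExt F z - poissonExt G z := by
  simp only [poissonExt_eq, smul_sub]
  rw [intervalIntegral.integral_sub (intervalIntegrable_poissonKernel_smul hF hz)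
    (intervalIntegrable_poissonKernel_smul hG hz), smul_sub]

theorem average_poissonKernel {z : ℂ} (hz : z ∈ Metric.ball (0 : ℂ) 1) :
    (2 * π)⁻¹ * ∫ t in (0 : ℝ)..2 * π, poissonKernel 0 z (circleMap 0 1 t) = 1 := by
  have h := poissonExt_differentiable (P := fun _ => 1) (by fun_prop) hz
  rw [poissonExt_eq] at h
  simp only [Complex.real_smul, mul_one] at h
  rw [intervalIntegral.integral_ofReal] at h
  exact_mod_cast h

theorem norm_poissonExt_le {F : ℝ → ℂ} {ε : ℝ} (h : ∀ t, ‖F t‖ ≤ ε) {z : ℂ}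
    (hz : z ∈ Metric.ball (0 : ℂ) 1) : ‖poissonExt F z‖ ≤ ε := by
  have hpi := Real.two_pi_pos
  rw [poissonExt_eq, norm_smul, Real.norm_of_nonneg (by positivity)]
  have : ‖∫ t in (0 : ℝ)..2 * π, poissonKernel 0 z (circleMap 0 1 t) • F t‖ ≤
      ∫ t in (0 : ℝ)..2 * π, poissonKernel 0 z (circleMap 0 1 t) * ε := by
    refine intervalIntegral.norm_integral_le_of_norm_le hpi.le
      (Eventually.of_forall fun t _ => ?_)
      (((continuous_poissonKernel_circleMap hz).mul continuous_const).intervalIntegrable _ _)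
    rw [norm_smul, Real.norm_of_nonneg (poissonKernel_circleMap_nonneg hz t)]
    exact mul_le_mul_of_nonneg_left (h t) (poissonKernel_circleMap_nonneg hz t)
  refine (mul_le_mul_of_nonneg_left this (by positivity)).trans_eq ?_
  rw [intervalIntegral.integral_mul_const, ← mul_assoc, average_poissonKernel hz, one_mul]

theorem le_im_poissonExt {F : ℝ → ℂ} (hF : Continuous F) {m : ℝ} (h : ∀ t, m ≤ (F t).im) {z : ℂ}
    (hz : z ∈ Metric.ball (0 : ℂ) 1) : m ≤ (poissonExt F z).im := by
  have hpi := Real.two_pi_pos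
  rw [poissonExt_eq, Complex.smul_im]
  have him : (∫ t in (0 : ℝ)..2 * π, poissonKernel 0 z (circleMap 0 1 t) • F t).im =
      ∫ t in (0 : ℝ)..2 * π, poissonKernel 0 z (circleMap 0 1 t) * (F t).im := by
    have := Complex.imCLM.intervalIntegral_comp_comm (intervalIntegrable_poissonKernel_smul hF hz)
    simpa using this.symm
  have hle : ∫ t in (0 : ℝ)..2 * π, poissonKernel 0 z (circleMap 0 1 t) * m ≤
      ∫ t in (0 : ℝ)..2 * π, poissonKernel 0 z (circleMap 0 1 t) * (F t).im := by
    have hc := continuous_poissonKernel_circleMap hz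
    refine intervalIntegral.integral_mono_on hpi.le
      ((hc.mul continuous_const).intervalIntegrable _ _)
      ((hc.mul (Complex.continuous_im.comp hF)).intervalIntegrable _ _) fun t _ => ?_
    exact mul_le_mul_of_nonneg_left (h t) (poissonKernel_circleMap_nonneg hz t)
  rw [intervalIntegral.integral_mul_const] at hle
  calc m = (2 * π)⁻¹ * ((∫ t in (0 : ℝ)..2 * π, poissonKernel 0 z (circleMap 0 1 t)) * m) := by
        rw [← mul_assoc, average_poissonKernel hz, one_mul]
    _ ≤ _ := by
        rw [him, smul_eq_mul]
        exact mul_le_mul_of_nonneg_left hle (by positivity)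

/-- A continuous function on the plane that agrees with a Poisson extension in the open disk takes
the boundary values of that extension on the circle. -/
theorem eq_boundary_of_eqOn_poissonExt {F : ℝ → ℂ} (hF : Continuous F)
    (hper : ∀ t, F (t + 2 * π) = F t) {W : ℂ → ℂ} (hW : Continuous W)
    (hWw : EqOn W (poissonExt F) (Metric.ball 0 1)) (t : ℝ) : W (circleMap 0 1 t) = F t := by
  refine eq_of_forall_dist_le fun ε hε => ?_
  obtain ⟨P, Q, hP, hQ, h⟩ := exists_differentiable_add_conj_approx hF hper (half_pos hε)
  have hPc := hP.continuous
  have hQc := hQ.continuous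
  have hball : ∀ z ∈ Metric.ball (0 : ℂ) 1, ‖W z - (P z + (starRingEnd ℂ) (Q z))‖ ≤ ε / 2 := by
    intro z hz
    have := norm_poissonExt_le (fun t => (h t).le) hz
    rwa [poissonExt_sub hF (by fun_prop) hz, poissonExt_add (by fun_prop) (by fun_prop) hz,
      poissonExt_conj, poissonExt_differentiable hP hz, poissonExt_differentiable hQ hz,
      ← hWw hz] at this
  have hcl : ‖W (circleMap 0 1 t) -
      (P (circleMap 0 1 t) + (starRingEnd ℂ) (Q (circleMap 0 1 t)))‖ ≤ ε / 2 := by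
    have hclosed : IsClosed {z : ℂ | ‖W z - (P z + (starRingEnd ℂ) (Q z))‖ ≤ ε / 2} :=
      isClosed_le (by fun_prop) continuous_const
    refine closure_minimal hball hclosed ?_
    rw [closure_ball _ one_ne_zero]
    simp
  rw [dist_eq_norm]
  have := norm_sub_le_norm_sub_add_norm_sub (W (circleMap 0 1 t))
    (P (circleMap 0 1 t) + (starRingEnd ℂ) (Q (circleMap 0 1 t))) (F t)
  have hFt := h t
  rw [norm_sub_rev] at hFt
  linarith

/-- The Poisson extension is the sum of a holomorphic and an antiholomorphic function. -/
theorem exists_poissonExt_eq_add_conj {F : ℝ → ℂ} (hF : Continuous F)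
    (hper : ∀ t, F (t + 2 * π) = F t) :
    ∃ A B : ℂ → ℂ, DifferentiableOn ℂ A (Metric.ball 0 1) ∧
      DifferentiableOn ℂ B (Metric.ball 0 1) ∧
      ∀ z ∈ Metric.ball (0 : ℂ) 1, poissonExt F z = A z + (starRingEnd ℂ) (B z) := by
  have hp : Function.Periodic F (2 * π) := hper
  let G : ℂ → ℂ := fun ζ => F (Complex.arg ζ)
  have hG : ∀ t, G (circleMap 0 1 t) = F t := fun t => by
    have h1 : Complex.arg (circleMap 0 1 t) = toIocMod Real.two_pi_pos (-π) t := by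
      simp [circleMap, Complex.arg_exp_mul_I]
    simp only [G, h1, toIocMod]
    exact hp.sub_zsmul_eq _
  have hint : ∀ f : ℂ → ℂ, Continuous f → CircleIntegrable (fun ζ => f (G ζ)) 0 1 := fun f hf => by
    simp only [CircleIntegrable, hG]
    exact (hf.comp hF).intervalIntegrable _ _
  let A : ℂ → ℂ := fun w => Real.circleAverage (fun ζ => herglotzRieszKernel 0 w ζ • G ζ) 0 1
  let B : ℂ → ℂ := fun w =>
    Real.circleAverage (fun ζ => herglotzRieszKernel 0 w ζ • (starRingEnd ℂ) (G ζ)) 0 1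
  refine ⟨fun z => A z / 2, fun z => B z / 2, ?_, ?_, fun z hz => ?_⟩
  · exact (differentiableOn_circleAverage_herglotzRieszKernel_smul
      (hint id continuous_id)).div_const _
  · exact (differentiableOn_circleAverage_herglotzRieszKernel_smul
      (hint _ Complex.continuous_conj)).div_const _
  · have hk : Continuous fun t => herglotzRieszKernel 0 z (circleMap 0 1 t) := by
      have := continuousOn_herglotzRieszKernel_sphere hz
      refine this.comp_continuous (continuous_circleMap 0 1) fun t => ?_
      simp
    have e1 : A z / 2 + (starRingEnd ℂ) (B z / 2) = (2 * π)⁻¹ •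
        ∫ t in (0 : ℝ)..2 * π, (herglotzRieszKernel 0 z (circleMap 0 1 t) * F t / 2 +
          (starRingEnd ℂ) (herglotzRieszKernel 0 z (circleMap 0 1 t)) * F t / 2) := by
      rw [intervalIntegral.integral_add (Continuous.intervalIntegrable (by fun_prop) _ _)
        (Continuous.intervalIntegrable (by fun_prop) _ _)]
      simp only [A, B, Real.circleAverage, hG, smul_eq_mul, Complex.real_smul, map_div₀, map_mul,
        Complex.conj_ofReal, ← intervalIntegral.intervalIntegral_conj, Complex.conj_conj,
        intervalIntegral.integral_div, map_ofNat]
      ring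
    rw [e1, poissonExt_eq]
    congr 1
    refine intervalIntegral.integral_congr fun t _ => ?_
    simp only [poissonKernel_eq_re_herglotzRieszKernel, Function.comp_apply, Complex.real_smul,
      Complex.re_eq_add_conj]
    ring

theorem exists_continuous_exp_eq {X : Type*} [TopologicalSpace X] [SimplyConnectedSpace X]
    [LocallyPathConnectedSpace X] {f : X → ℂ} (hf : Continuous f) (hf₀ : ∀ x, f x ≠ 0) :
    ∃ L : X → ℂ, Continuous L ∧ ∀ x, Complex.exp (L x) = f x := by
  obtain ⟨x₀⟩ : Nonempty X := inferInstance
  obtain ⟨L, ⟨-, hL⟩, -⟩ := Complex.isCoveringMapOn_exp.existsUnique_continuousMap_lifts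
    ⟨f, hf⟩ (Complex.exp_log (hf₀ x₀)) hf₀
  exact ⟨L, L.continuous, fun x => congr_fun hL x⟩

theorem IsPreconnected.constOn_of_exp_eq {X : Type*} [TopologicalSpace X] {s : Set X}
    (hs : IsPreconnected s) {g : X → ℂ} (hg : ContinuousOn g s) {c : ℂ}
    (h : ∀ x ∈ s, Complex.exp (g x) = c) {x y : X} (hx : x ∈ s) (hy : y ∈ s) : g x = g y :=
  Complex.isCoveringMap_exp.constOn_of_comp hs hg
    (fun a ha b hb => Subtype.ext ((h a ha).trans (h b hb).symm)) hx hy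

theorem exists_int_of_apply_eq {F : ℝ → ℂ} (hper : ∀ t, F (t + 2 * π) = F t)
    (hinj : InjOn F (Ico 0 (2 * π))) {a b : ℝ} (h : F a = F b) :
    ∃ k : ℤ, a = b + k * (2 * π) := by
  have hp : Function.Periodic F (2 * π) := hper
  have hmod : ∀ a, F (toIcoMod Real.two_pi_pos 0 a) = F a := fun a => by
    rw [toIcoMod]; exact hp.sub_zsmul_eq _
  have hmem : ∀ a, toIcoMod Real.two_pi_pos 0 a ∈ Ico 0 (2 * π) := fun a => by
    simpa using toIcoMod_mem_Ico Real.two_pi_pos 0 a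
  have := hinj (hmem a) (hmem b) (by rw [hmod, hmod, h])
  simp only [toIcoMod, zsmul_eq_mul] at this
  refine ⟨toIcoDiv Real.two_pi_pos 0 a - toIcoDiv Real.two_pi_pos 0 b, ?_⟩
  push_cast
  linarith

theorem apply_add_ne_of_mem_Ioo {F : ℝ → ℂ} (hper : ∀ t, F (t + 2 * π) = F t)
    (hinj : InjOn F (Ico 0 (2 * π))) (s : ℝ) {h : ℝ} (hh : h ∈ Ioo 0 (2 * π)) :
    F (s + h) ≠ F s := by
  intro he
  obtain ⟨k, hk⟩ := exists_int_of_apply_eq hper hinj he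
  have hpi := Real.two_pi_pos
  have h1 : h = k * (2 * π) := by linarith
  have h2 : (0 : ℝ) < k := by
    by_contra! hc
    nlinarith [hh.1]
  have h3 : (k : ℝ) < 1 := by
    by_contra! hc
    nlinarith [hh.2]
  have h4 : (0 : ℤ) < k := by exact_mod_cast h2
  have h5 : k < 1 := by exact_mod_cast h3
  omega

/-- The mean of `F'` over the segment from `s` to `s + h`, that is the secant slope
`(F (s + h) - F s) / h` extended continuously by `F' s` to `h = 0`. -/
noncomputable def meanDeriv (F : ℝ → ℂ) (s h : ℝ) : ℂ :=
  ∫ x in (0 : ℝ)..1, deriv F (s + x * h)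

theorem continuous_meanDeriv {F : ℝ → ℂ} (hF : ContDiff ℝ 1 F) :
    Continuous fun p : ℝ × ℝ => meanDeriv F p.1 p.2 := by
  have hc : Continuous (deriv F) := hF.continuous_deriv le_rfl
  unfold meanDeriv
  refine intervalIntegral.continuous_parametric_intervalIntegral_of_continuous' ?_ 0 1
  simp only [Function.uncurry_def]
  fun_prop

theorem mul_meanDeriv {F : ℝ → ℂ} (hF : ContDiff ℝ 1 F) (s h : ℝ) :
    h * meanDeriv F s h = F (s + h) - F s := by
  have hc : Continuous (deriv F) := hF.continuous_deriv le_rfl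
  have := intervalIntegral.integral_unitInterval_deriv_eq_sub (f := F) (f' := deriv F)
    (z₀ := s) (z₁ := h)
    (by simp only [smul_eq_mul]; fun_prop)
    (fun t _ => (hF.differentiable one_ne_zero _).hasDerivAt)
  simpa [meanDeriv] using this

theorem meanDeriv_zero (F : ℝ → ℂ) (s : ℝ) : meanDeriv F s 0 = deriv F s := by
  simp [meanDeriv]

theorem meanDeriv_reverse (F : ℝ → ℂ) (s h : ℝ) : meanDeriv F (s + h) (-h) = meanDeriv F s h := by
  have := intervalIntegral.integral_comp_sub_left (a := 0) (b := 1)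
    (fun x => deriv F (s + x * h)) (1 : ℝ)
  simp only [sub_zero, sub_self] at this
  rw [meanDeriv, meanDeriv, ← this]
  congr 1; ext x; congr 1; ring

theorem deriv_periodic {F : ℝ → ℂ} (hper : ∀ t, F (t + 2 * π) = F t) (t : ℝ) :
    deriv F (t + 2 * π) = deriv F t := by
  have h := deriv_comp_add_const F (2 * π) t
  rw [← h]
  exact congr_arg (fun G => deriv G t) (funext hper)

theorem meanDeriv_add_two_pi {F : ℝ → ℂ} (hper : ∀ t, F (t + 2 * π) = F t) (s h : ℝ) :
    meanDeriv F (s + 2 * π) h = meanDeriv F s h := by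
  rw [meanDeriv, meanDeriv]
  congr 1; ext x
  rw [← deriv_periodic hper (s + x * h)]
  congr 1; ring

/-- A positive multiple of the chord `F (s + h) - F s`, renormalised to stay nonzero at the
ends of `0 ≤ h ≤ 2π`. -/
noncomputable def chord (F : ℝ → ℂ) (s h : ℝ) : ℂ :=
  meanDeriv F s h - meanDeriv F s (h - 2 * π)

theorem mul_chord {F : ℝ → ℂ} (hF : ContDiff ℝ 1 F) (hper : ∀ t, F (t + 2 * π) = F t)
    (s h : ℝ) :
    (h * (2 * π - h) : ℝ) * chord F s h = (2 * π : ℝ) * (F (s + h) - F s) := by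
  have h1 := mul_meanDeriv hF s h
  have h2 := mul_meanDeriv hF s (h - 2 * π)
  have h3 : F (s + (h - 2 * π)) = F (s + h) := by rw [← hper]; congr 1; ring
  rw [h3] at h2
  rw [chord]
  push_cast at h2 ⊢
  linear_combination (2 * π - h) * h1 + h * h2

theorem chord_zero {F : ℝ → ℂ} (hF : ContDiff ℝ 1 F) (hper : ∀ t, F (t + 2 * π) = F t)
    (s : ℝ) : chord F s 0 = deriv F s := by
  have h2 := mul_meanDeriv hF s (0 - 2 * π)
  have h3 : F (s + (0 - 2 * π)) = F s := by rw [← hper]; congr 1; ring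
  rw [h3, sub_self, mul_eq_zero] at h2
  have h4 : ((0 - 2 * π : ℝ) : ℂ) ≠ 0 := by
    norm_cast
    linarith [Real.two_pi_pos]
  rw [chord, meanDeriv_zero, h2.resolve_left h4, sub_zero]

theorem chord_reverse {F : ℝ → ℂ} (hper : ∀ t, F (t + 2 * π) = F t) (s h : ℝ) :
    chord F (s + h) (2 * π - h) = -chord F s h := by
  have h1 := meanDeriv_reverse F s h
  have h2 := meanDeriv_reverse F s (h - 2 * π)
  rw [← meanDeriv_add_two_pi hper] at h2
  have e1 : s + (h - 2 * π) + 2 * π = s + h := by ring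
  have e2 : -(h - 2 * π) = 2 * π - h := by ring
  have e3 : 2 * π - h - 2 * π = -h := by ring
  rw [e1, e2] at h2
  rw [chord, chord, e3, h1, h2]
  ring

theorem chord_two_pi {F : ℝ → ℂ} (hF : ContDiff ℝ 1 F) (hper : ∀ t, F (t + 2 * π) = F t)
    (s : ℝ) : chord F s (2 * π) = -deriv F s := by
  have := chord_reverse hper s 0
  rwa [add_zero, sub_zero, chord_zero hF hper] at this

theorem chord_ne_zero {F : ℝ → ℂ} (hF : ContDiff ℝ 1 F) (hper : ∀ t, F (t + 2 * π) = F t)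
    (hF' : ∀ t, deriv F t ≠ 0) (hinj : InjOn F (Ico 0 (2 * π))) (s : ℝ) {h : ℝ}
    (hh : h ∈ Icc 0 (2 * π)) : chord F s h ≠ 0 := by
  rcases eq_endpoints_or_mem_Ioo_of_mem_Icc hh with rfl | rfl | hh
  · rw [chord_zero hF hper]; exact hF' s
  · rw [chord_two_pi hF hper]; exact neg_ne_zero.2 (hF' s)
  · intro h0
    have h1 := mul_chord hF hper s h
    rw [h0, mul_zero, eq_comm, mul_eq_zero, sub_eq_zero] at h1
    rcases h1 with h1 | h1
    · exact Real.two_pi_pos.ne' (by exact_mod_cast h1)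
    · exact apply_add_ne_of_mem_Ioo hper hinj s hh h1

theorem chord_im_nonneg {F : ℝ → ℂ} (hF : ContDiff ℝ 1 F) (hper : ∀ t, F (t + 2 * π) = F t)
    {s₀ c : ℝ} (hd : deriv F s₀ = c) (hmin : ∀ t, (F s₀).im ≤ (F t).im)
    {h : ℝ} (hh : h ∈ Icc 0 (2 * π)) : 0 ≤ (chord F s₀ h).im := by
  rcases eq_endpoints_or_mem_Ioo_of_mem_Icc hh with rfl | rfl | hh
  · simp [chord_zero hF hper, hd]
  · simp [chord_two_pi hF hper, hd]
  · have h1 := congr_arg Complex.im (mul_chord hF hper s₀ h)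
    rw [Complex.im_ofReal_mul, Complex.im_ofReal_mul, Complex.sub_im] at h1
    have h2 : 0 < h * (2 * π - h) := mul_pos hh.1 (by linarith [hh.2])
    have h3 : 0 ≤ 2 * π * ((F (s₀ + h)).im - (F s₀).im) :=
      mul_nonneg Real.two_pi_pos.le (by linarith [hmin (s₀ + h)])
    rw [← h1] at h3
    exact nonneg_of_mul_nonneg_right h3 h2

/-- **Hopf's Umlaufsatz**: the tangent of a regular simple closed curve, which points in the
positive real direction at a lowest point of the curve, turns exactly once. -/
theorem exists_log_deriv_of_simple_closed {F : ℝ → ℂ} (hF : ContDiff ℝ 1 F)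
    (hper : ∀ t, F (t + 2 * π) = F t)
    (hF' : ∀ t, deriv F t ≠ 0)
    (hinj : InjOn F (Ico 0 (2 * π))) {s₀ c : ℝ} (hc : 0 < c) (hd : deriv F s₀ = c)
    (hmin : ∀ t, (F s₀).im ≤ (F t).im) :
    ∃ Λ : ℝ → ℂ, Continuous Λ ∧ (∀ t, Complex.exp (Λ t) = deriv F t) ∧
      ∀ t, Λ (t + 2 * π) = Λ t + 2 * π * Complex.I := by
  have hpi := Real.two_pi_pos
  let clamp : ℝ → ℝ := fun h => max 0 (min h (2 * π))
  have hclamp : ∀ h, clamp h ∈ Icc 0 (2 * π) := fun h =>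
    ⟨le_max_left _ _, max_le hpi.le (min_le_right _ _)⟩
  have hclamp_eq : ∀ h ∈ Icc 0 (2 * π), clamp h = h := fun h hh => by
    simp [clamp, hh.1, hh.2]
  have hmean := continuous_meanDeriv hF
  have hchord : Continuous fun p : ℝ × ℝ => chord F p.1 p.2 :=
    hmean.sub (hmean.comp (by fun_prop : Continuous fun p : ℝ × ℝ => (p.1, p.2 - 2 * π)))
  obtain ⟨L, hL, hexp⟩ := exists_continuous_exp_eq
    (f := fun p : ℝ × ℝ => chord F p.1 (clamp p.2))
    (hchord.comp (by fun_prop : Continuous fun p : ℝ × ℝ => (p.1, clamp p.2)))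
    (fun p => chord_ne_zero hF hper hF' hinj p.1 (hclamp p.2))
  have hexp' : ∀ s, ∀ h ∈ Icc 0 (2 * π), Complex.exp (L (s, h)) = chord F s h := fun s h hh => by
    rw [hexp, hclamp_eq h hh]
  have h0 : (0 : ℝ) ∈ Icc 0 (2 * π) := ⟨le_rfl, hpi.le⟩
  have h2 : 2 * π ∈ Icc 0 (2 * π) := ⟨hpi.le, le_rfl⟩
  let g : ℝ × ℝ → ℂ := fun p => L (p.1 + p.2, 2 * π - p.2) - L (p.1, p.2)
  have hgconst : ∀ s, ∀ h ∈ Icc 0 (2 * π), g (s, h) = g (s₀, 0) := fun s h hh => by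
    refine IsPreconnected.constOn_of_exp_eq (s := univ ×ˢ Icc 0 (2 * π)) (c := -1)
      (isPreconnected_univ.prod isPreconnected_Icc) (g := g) (by fun_prop) ?_
      ⟨trivial, hh⟩ ⟨trivial, h0⟩
    rintro ⟨s, h⟩ ⟨-, hh⟩
    have hh' : 2 * π - h ∈ Icc 0 (2 * π) := ⟨by linarith [hh.2], by linarith [hh.1]⟩
    have hne := chord_ne_zero hF hper hF' hinj s hh
    simp only [g]
    rw [Complex.exp_sub, hexp' _ _ hh, hexp' _ _ hh', chord_reverse hper, neg_div, div_self hne]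
  have hval : g (s₀, 0) = π * Complex.I := by
    let k : ℝ → ℂ := fun h => L (s₀, h) - Complex.log (-Complex.I * chord F s₀ h)
    have hk : k (2 * π) = k 0 := by
      refine IsPreconnected.constOn_of_exp_eq (s := Icc 0 (2 * π)) (c := Complex.I)
        isPreconnected_Icc (g := k) ?_ ?_ h2 h0
      · refine ContinuousOn.sub (by fun_prop) (ContinuousOn.clog ?_ fun h hh => ?_)
        · exact (continuous_const.mul (hchord.comp
            (by fun_prop : Continuous fun h : ℝ => (s₀, h)))).continuousOn
        · have him := chord_im_nonneg hF hper hd hmin hh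
          have hne := chord_ne_zero hF hper hF' hinj s₀ hh
          rw [Complex.mem_slitPlane_iff]
          simp only [neg_mul, Complex.neg_re, Complex.I_mul_re, neg_neg, Complex.neg_im,
            Complex.I_mul_im, ne_eq, neg_eq_zero]
          by_contra! hcon
          exact hne (Complex.ext hcon.2 (le_antisymm hcon.1 him))
      · intro h hh
        have hne := chord_ne_zero hF hper hF' hinj s₀ hh
        simp only [k]
        rw [Complex.exp_sub, hexp' _ _ hh, Complex.exp_log (by simp [hne])]
        field_simp
        simp
    simp only [k, chord_two_pi hF hper, chord_zero hF hper, hd, neg_mul_neg] at hk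
    rw [Complex.log_mul_ofReal c hc _ Complex.I_ne_zero, Complex.log_mul_ofReal c hc _
      (neg_ne_zero.2 Complex.I_ne_zero), Complex.log_I, Complex.log_neg_I] at hk
    simp only [g, add_zero, sub_zero]
    linear_combination hk
  refine ⟨fun t => L (t, 0), by fun_prop, fun t => ?_, fun t => ?_⟩
  · rw [hexp' _ _ h0, chord_zero hF hper]
  · have e1 := hgconst t 0 h0
    have e2 := hgconst t (2 * π) h2
    rw [hval] at e1 e2
    simp only [g, add_zero, sub_zero, sub_self] at e1 e2
    linear_combination e1 + e2

/-- The Wirtinger derivative `∂W/∂z`. -/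
noncomputable def wirtinger (W : ℂ → ℂ) (z : ℂ) : ℂ :=
  (fderiv ℝ W z 1 - Complex.I * fderiv ℝ W z Complex.I) / 2

/-- The Wirtinger derivative `∂W/∂z̄`. -/
noncomputable def wirtingerConj (W : ℂ → ℂ) (z : ℂ) : ℂ :=
  (fderiv ℝ W z 1 + Complex.I * fderiv ℝ W z Complex.I) / 2

theorem fderiv_eq_wirtinger (W : ℂ → ℂ) (z h : ℂ) :
    fderiv ℝ W z h = wirtinger W z * h + wirtingerConj W z * (starRingEnd ℂ) h := by
  have h1 : fderiv ℝ W z h = h.re * fderiv ℝ W z 1 + h.im * fderiv ℝ W z Complex.I := by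
    have hh : h = h.re • (1 : ℂ) + h.im • Complex.I := by simp [Complex.re_add_im]
    conv_lhs => rw [hh]
    rw [map_add, map_smul, map_smul, Complex.real_smul, Complex.real_smul]
  rw [h1, wirtinger, wirtingerConj]
  conv_rhs => rw [← Complex.re_add_im h]
  simp only [map_add, map_mul, Complex.conj_ofReal, Complex.conj_I]
  linear_combination (h.im * fderiv ℝ W z Complex.I) * Complex.I_mul_I

theorem Jac_eq (W : ℂ → ℂ) (z : ℂ) : Jac W z = ‖wirtinger W z‖ ^ 2 - ‖wirtingerConj W z‖ ^ 2 := by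
  rw [Jac, ← LinearMap.det_toMatrix Complex.basisOneI, Matrix.det_fin_two]
  simp only [LinearMap.toMatrix_apply, Complex.coe_basisOneI, Complex.coe_basisOneI_repr,
    Matrix.cons_val_zero, Matrix.cons_val_one, ContinuousLinearMap.coe_coe, wirtinger,
    wirtingerConj, Complex.sq_norm, Complex.normSq_apply]
  simp
  ring

theorem Jac_pos_iff (W : ℂ → ℂ) (z : ℂ) : 0 < Jac W z ↔ ‖wirtingerConj W z‖ < ‖wirtinger W z‖ := by
  rw [Jac_eq, sub_pos]
  exact pow_lt_pow_iff_left₀ (norm_nonneg _) (norm_nonneg _) two_ne_zero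

theorem continuous_wirtinger {W : ℂ → ℂ} (hW : ContDiff ℝ 1 W) : Continuous (wirtinger W) := by
  have hc : Continuous (fderiv ℝ W) := hW.continuous_fderiv one_ne_zero
  unfold wirtinger
  fun_prop

theorem continuous_wirtingerConj {W : ℂ → ℂ} (hW : ContDiff ℝ 1 W) :
    Continuous (wirtingerConj W) := by
  have hc : Continuous (fderiv ℝ W) := hW.continuous_fderiv one_ne_zero
  unfold wirtingerConj
  fun_prop

theorem wirtinger_add_conj {W A B : ℂ → ℂ} {U : Set ℂ} (hU : IsOpen U)
    (hA : DifferentiableOn ℂ A U) (hB : DifferentiableOn ℂ B U)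
    (hW : ∀ z ∈ U, W z = A z + (starRingEnd ℂ) (B z)) {z : ℂ} (hz : z ∈ U) :
    wirtinger W z = deriv A z ∧ wirtingerConj W z = (starRingEnd ℂ) (deriv B z) := by
  have hA' := ((hA.differentiableAt (hU.mem_nhds hz)).hasDerivAt.hasFDerivAt).restrictScalars ℝ
  have hB' := ((hB.differentiableAt (hU.mem_nhds hz)).hasDerivAt.hasFDerivAt).restrictScalars ℝ
  have hconj := (Complex.conjCLE.toContinuousLinearMap.hasFDerivAt (x := B z)).comp z hB'
  have hd := (hA'.add hconj).congr_of_eventuallyEq (f₁ := W)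
    (eventually_of_mem (hU.mem_nhds hz) fun w hw => by simp [hW w hw])
  have hI := Complex.I_mul_I
  constructor
  · rw [wirtinger, hd.fderiv]
    simp
    linear_combination (-deriv A z / 2 + (starRingEnd ℂ) (deriv B z) / 2) * hI
  · rw [wirtingerConj, hd.fderiv]
    simp
    linear_combination (deriv A z / 2 - (starRingEnd ℂ) (deriv B z) / 2) * hI

theorem DiffContOnCl.norm_lt_of_sphere {φ : ℂ → ℂ} {c : ℝ}
    (hφ : DiffContOnCl ℂ φ (Metric.ball 0 1)) (h : ∀ ζ : ℂ, ‖ζ‖ = 1 → ‖φ ζ‖ < c) {z : ℂ}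
    (hz : z ∈ Metric.ball (0 : ℂ) 1) : ‖φ z‖ < c := by
  have hcont : ContinuousOn (fun ζ => ‖φ ζ‖) (Metric.sphere (0 : ℂ) 1) :=
    (hφ.continuousOn_ball.mono Metric.sphere_subset_closedBall).norm
  obtain ⟨ζ₀, hζ₀, hmax⟩ := (isCompact_sphere (0 : ℂ) 1).exists_isMaxOn
    (NormedSpace.sphere_nonempty.2 zero_le_one) hcont
  refine lt_of_le_of_lt ?_ (h ζ₀ (by simpa using hζ₀))
  refine Complex.norm_le_of_forall_mem_frontier_norm_le Metric.isBounded_ball hφ (fun ζ hζ => ?_)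
    (subset_closure hz)
  rw [frontier_ball _ one_ne_zero] at hζ
  exact hmax hζ

theorem DiffContOnCl.re_pos_of_sphere {φ : ℂ → ℂ}
    (hφ : DiffContOnCl ℂ φ (Metric.ball 0 1)) (h : ∀ ζ : ℂ, ‖ζ‖ = 1 → 0 < (φ ζ).re) {z : ℂ}
    (hz : z ∈ Metric.ball (0 : ℂ) 1) : 0 < (φ z).re := by
  have := DiffContOnCl.norm_lt_of_sphere (φ := fun z => Complex.exp (-φ z)) (c := 1)
    (Complex.differentiable_exp.comp_diffContOnCl hφ.neg)
    (fun ζ hζ => by simpa [Complex.norm_exp] using h ζ hζ) hz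
  simpa [Complex.norm_exp] using this

theorem exists_circleMap_eq {ζ : ℂ} (hζ : ‖ζ‖ = 1) : ∃ t : ℝ, circleMap 0 1 t = ζ :=
  ⟨Complex.arg ζ, by
    have := Complex.norm_mul_exp_arg_mul_I ζ
    rw [hζ] at this
    simpa [circleMap] using this⟩

/-- A function holomorphic in the disk whose boundary values stay within a right angle of
a single-valued continuous direction `exp (i θ)` has no zeros. -/
theorem ne_zero_of_re_mul_exp_pos {a : ℂ → ℂ} (ha : DiffContOnCl ℂ a (Metric.ball 0 1))
    (hac : Continuous a) {θ : ℝ → ℝ} (hθ : Continuous θ) (hper : ∀ t, θ (t + 2 * π) = θ t)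
    (hpos : ∀ t, 0 < (a (circleMap 0 1 t) * Complex.exp (-(θ t * Complex.I))).re) {z : ℂ}
    (hz : z ∈ Metric.ball (0 : ℂ) 1) : a z ≠ 0 := by
  obtain ⟨δ, hδ, hδle⟩ : ∃ δ > 0, ∀ t,
      δ ≤ (a (circleMap 0 1 t) * Complex.exp (-(θ t * Complex.I))).re := by
    have hp : Function.Periodic
        (fun t => (a (circleMap 0 1 t) * Complex.exp (-(θ t * Complex.I))).re) (2 * π) :=
      fun t => by simp only [hper, periodic_circleMap 0 1 t]
    obtain ⟨m, ⟨t₀, ht₀⟩, hm⟩ := (hp.compact_of_continuous Real.two_pi_pos.ne'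
      (by fun_prop)).exists_isLeast (range_nonempty _)
    exact ⟨m, ht₀ ▸ hpos t₀, fun t => hm ⟨t, rfl⟩⟩
  obtain ⟨M, hM⟩ : ∃ M, ∀ t : ℝ, ‖a (circleMap 0 1 t)‖ ≤ M := by
    obtain ⟨M, hM⟩ := (isCompact_sphere (0 : ℂ) 1).exists_bound_of_continuousOn hac.continuousOn
    exact ⟨M, fun t => hM _ (by simp)⟩
  have hM0 : 0 ≤ M := (norm_nonneg _).trans (hM 0)
  obtain ⟨P, hP, hPθ⟩ := exists_differentiable_im_approx hθ hper
    (ε := δ / (M + 1)) (by positivity)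
  have hk : DiffContOnCl ℂ (fun z => a z * Complex.exp (-P z)) (Metric.ball 0 1) :=
    ha.smul (by fun_prop : Differentiable ℂ fun z => Complex.exp (-P z)).diffContOnCl
  have := hk.re_pos_of_sphere (fun ζ hζ => ?_) hz
  · rintro h0
    simp [h0] at this
  obtain ⟨t, rfl⟩ := exists_circleMap_eq hζ
  set ζ := circleMap 0 1 t
  have e1 : a ζ * Complex.exp (-P ζ) =
      Real.exp (-(P ζ).re) * (a ζ * Complex.exp (-((P ζ).im * Complex.I))) := by
    rw [Complex.ofReal_exp, mul_left_comm, ← Complex.exp_add]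
    congr 2
    conv_lhs => rw [← Complex.re_add_im (P ζ)]
    push_cast
    ring
  have e2 : ‖Complex.exp (-(θ t * Complex.I)) - Complex.exp (-((P ζ).im * Complex.I))‖ ≤
      |θ t - (P ζ).im| := by
    have h1 : Complex.exp (-(θ t * Complex.I)) - Complex.exp (-((P ζ).im * Complex.I)) =
        Complex.exp ((-θ t : ℝ) * Complex.I) *
          (1 - Complex.exp (Complex.I * (θ t - (P ζ).im : ℝ))) := by
      rw [mul_sub, ← Complex.exp_add, mul_one]
      push_cast
      congr 2 <;> ring
    rw [h1, norm_mul, Complex.norm_exp_ofReal_mul_I, one_mul, norm_sub_rev]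
    exact Real.norm_exp_I_mul_ofReal_sub_one_le
  have e3 : (a ζ * Complex.exp (-(θ t * Complex.I))).re -
      (a ζ * Complex.exp (-((P ζ).im * Complex.I))).re < δ := by
    rw [← Complex.sub_re, ← mul_sub]
    refine (Complex.re_le_norm _).trans_lt ?_
    rw [norm_mul]
    calc _ ≤ M * (δ / (M + 1)) :=
          mul_le_mul (hM t) (e2.trans (hPθ t).le) (norm_nonneg _) hM0
      _ < δ := by
          rw [← mul_div_assoc, div_lt_iff₀ (by positivity)]
          nlinarith
  rw [e1, Complex.re_ofReal_mul]
  exact mul_pos (Real.exp_pos _) (by linarith [hδle t])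

/-- If the boundary Jacobian of a harmonic map is positive and the image of the unit circle turns
exactly once, then the Jacobian is positive in the disk. -/
theorem Jac_pos_of_boundary {F : ℝ → ℂ} {W A B : ℂ → ℂ} (hW : ContDiff ℝ 1 W)
    (hA : DifferentiableOn ℂ A (Metric.ball 0 1)) (hB : DifferentiableOn ℂ B (Metric.ball 0 1))
    (hWAB : ∀ z ∈ Metric.ball (0 : ℂ) 1, W z = A z + (starRingEnd ℂ) (B z))
    (hbd : ∀ t, W (circleMap 0 1 t) = F t)
    {Λ : ℝ → ℂ} (hΛ : Continuous Λ) (hexp : ∀ t, Complex.exp (Λ t) = deriv F t)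
    (hturn : ∀ t, Λ (t + 2 * π) = Λ t + 2 * π * Complex.I)
    (hJ : ∀ ζ : ℂ, ‖ζ‖ = 1 → 0 < Jac W ζ) {z : ℂ} (hz : z ∈ Metric.ball (0 : ℂ) 1) :
    0 < Jac W z := by
  have hball : IsOpen (Metric.ball (0 : ℂ) 1) := Metric.isOpen_ball
  have hw := fun z hz => wirtinger_add_conj hball hA hB hWAB (z := z) hz
  have hac := continuous_wirtinger hW
  have hbc := continuous_wirtingerConj hW
  have ha : DiffContOnCl ℂ (wirtinger W) (Metric.ball 0 1) :=
    ⟨(hA.deriv hball).congr fun z hz => (hw z hz).1, hac.continuousOn⟩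
  have hb : DiffContOnCl ℂ (fun z => (starRingEnd ℂ) (wirtingerConj W z)) (Metric.ball 0 1) :=
    ⟨(hB.deriv hball).congr fun z hz => by rw [(hw z hz).2, Complex.conj_conj],
      (Complex.continuous_conj.comp hbc).continuousOn⟩
  have hbd_lt : ∀ ζ : ℂ, ‖ζ‖ = 1 → ‖wirtingerConj W ζ‖ < ‖wirtinger W ζ‖ := fun ζ hζ =>
    (Jac_pos_iff W ζ).1 (hJ ζ hζ)
  have hne : ∀ z ∈ Metric.ball (0 : ℂ) 1, wirtinger W z ≠ 0 := fun z hz => by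
    refine ne_zero_of_re_mul_exp_pos ha hac (θ := fun t => (Λ t).im - t - π / 2) (by fun_prop)
      (fun t => ?_) (fun t => ?_) hz
    · simp [hturn]
    · set ζ := circleMap 0 1 t with hζ
      have hlt := hbd_lt ζ (by simp [hζ])
      have hder : deriv F t = wirtinger W ζ * (ζ * Complex.I) +
          wirtingerConj W ζ * (starRingEnd ℂ) (ζ * Complex.I) := by
        rw [← fderiv_eq_wirtinger]
        have h1 := (hW.differentiable one_ne_zero ζ).hasFDerivAt.comp_hasDerivAt t
          (hasDerivAt_circleMap 0 1 t)
        have h2 : W ∘ circleMap 0 1 = F := funext hbd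
        rw [h2] at h1
        exact h1.deriv
      set α := wirtinger W ζ * (ζ * Complex.I) with hα
      set β := wirtingerConj W ζ * (starRingEnd ℂ) (ζ * Complex.I) with hβ
      have hαβ : ‖β‖ < ‖α‖ := by simpa [hα, hβ, hζ] using hlt
      have hre : 0 < (α * (starRingEnd ℂ) (deriv F t)).re := by
        rw [hder, map_add, mul_add, Complex.mul_conj, Complex.add_re, Complex.ofReal_re,
          Complex.normSq_eq_norm_sq]
        have h1 := Complex.abs_re_le_norm (α * (starRingEnd ℂ) β)
        rw [norm_mul, Complex.norm_conj] at h1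
        have h2 := neg_abs_le (α * (starRingEnd ℂ) β).re
        nlinarith [norm_nonneg α, norm_nonneg β]
      have hfac : α * (starRingEnd ℂ) (deriv F t) = Real.exp (Λ t).re *
          (wirtinger W ζ * Complex.exp (-(((Λ t).im - t - π / 2 : ℝ) * Complex.I))) := by
        have h1 : ζ = Complex.exp (t * Complex.I) := by simp [hζ, circleMap]
        have h2 : Complex.I = Complex.exp (π / 2 * Complex.I) := Complex.exp_pi_div_two_mul_I.symm
        have h3 : (starRingEnd ℂ) (deriv F t) =
            Complex.exp ((Λ t).re - (Λ t).im * Complex.I) := by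
          rw [← hexp, ← Complex.exp_conj]
          congr 1
          apply Complex.ext <;> simp
        rw [h3, hα, Complex.ofReal_exp, mul_assoc, mul_left_comm (Complex.exp _)]
        congr 1
        conv_lhs => enter [1, 2]; rw [h2]
        rw [h1, ← Complex.exp_add, ← Complex.exp_add, ← Complex.exp_add]
        congr 1
        push_cast
        ring
      rw [hfac, Complex.re_ofReal_mul] at hre
      exact pos_of_mul_pos_right hre (Real.exp_pos _).le
  have hne' : ∀ z ∈ closure (Metric.ball (0 : ℂ) 1), wirtinger W z ≠ 0 := fun z hz => by
    rw [closure_ball _ one_ne_zero, mem_closedBall_zero_iff] at hz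
    rcases hz.lt_or_eq with hz | hz
    · exact hne z (mem_ball_zero_iff.2 hz)
    · exact norm_pos_iff.1 ((norm_nonneg _).trans_lt (hbd_lt z hz))
  have hquot : DiffContOnCl ℂ
      (fun z => (wirtinger W z)⁻¹ • (starRingEnd ℂ) (wirtingerConj W z)) (Metric.ball 0 1) :=
    (ha.inv hne').smul hb
  have hone : ∀ {z : ℂ}, wirtinger W z ≠ 0 →
      (‖(wirtinger W z)⁻¹ • (starRingEnd ℂ) (wirtingerConj W z)‖ < 1 ↔ 0 < Jac W z) := by
    intro z hz
    rw [Jac_pos_iff, norm_smul, norm_inv, Complex.norm_conj, inv_mul_lt_iff₀ (norm_pos_iff.2 hz),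
      mul_one]
  refine (hone (hne z hz)).1 (hquot.norm_lt_of_sphere (fun ζ hζ => ?_) hz)
  refine (hone (hne' ζ ?_)).2 (hJ ζ hζ)
  rw [closure_ball _ one_ne_zero, mem_closedBall_zero_iff, hζ]

/-- A lowest point of the boundary curve of `D` is a lowest point of `D`, and the curve passes it
with a positive horizontal velocity. -/
theorem exists_lowest_point {D : Set ℂ} (hDo : IsOpen D) (hDb : Bornology.IsBounded D)
    (hDne : D.Nonempty) {F : ℝ → ℂ} (hF : ContDiff ℝ 1 F) (hper : ∀ t, F (t + 2 * π) = F t)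
    (hF' : ∀ t, deriv F t ≠ 0) (hfront : F '' Ico 0 (2 * π) = frontier D)
    (horient : ∀ t, ∃ ε > (0 : ℝ), ∀ u ∈ Ioo (0 : ℝ) ε,
      F t + (u : ℂ) * (Complex.I * deriv F t) ∈ D) :
    ∃ s₀ c : ℝ, 0 < c ∧ deriv F s₀ = c ∧ (∀ t, (F s₀).im ≤ (F t).im) ∧
      ∀ z ∈ D, (F s₀).im ≤ z.im := by
  have hcomp : IsCompact (closure D) := hDb.isCompact_closure
  obtain ⟨s₀, hs₀⟩ : ∃ s₀, ∀ t, (F s₀).im ≤ (F t).im := by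
    have hp : Function.Periodic (fun t => (F t).im) (2 * π) := fun t => by simp only [hper]
    obtain ⟨m, ⟨t₀, ht₀⟩, hm⟩ := (hp.compact_of_continuous Real.two_pi_pos.ne'
      (Complex.continuous_im.comp hF.continuous)).exists_isLeast (range_nonempty _)
    exact ⟨t₀, fun t => (le_of_eq ht₀).trans (hm ⟨t, rfl⟩)⟩
  have hlow : ∀ z ∈ D, (F s₀).im ≤ z.im := by
    obtain ⟨p, hp, hpmin⟩ := hcomp.exists_isMinOn hDne.closure Complex.continuous_im.continuousOn
    have hpD : p ∉ D := by
      intro hpD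
      obtain ⟨ε, hε, hball⟩ := Metric.isOpen_iff.1 hDo p hpD
      have hmem : p - (ε / 2 : ℝ) * Complex.I ∈ D := hball (by
        rw [Metric.mem_ball, dist_eq_norm, sub_sub_cancel_left, norm_neg, norm_mul, Complex.norm_I,
          mul_one, Complex.norm_real, Real.norm_eq_abs, abs_of_pos (half_pos hε)]
        exact half_lt_self hε)
      have := hpmin (subset_closure hmem)
      simp at this
      linarith
    have hpf : p ∈ frontier D := by
      rw [hDo.frontier_eq]
      exact ⟨hp, hpD⟩
    rw [← hfront] at hpf
    obtain ⟨t, -, rfl⟩ := hpf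
    exact fun z hz => (hs₀ t).trans (hpmin (subset_closure hz))
  have hdF : HasDerivAt F (deriv F s₀) s₀ := (hF.differentiable one_ne_zero s₀).hasDerivAt
  have him : (deriv F s₀).im = 0 := by
    have h1 : HasDerivAt (fun t => (F t).im) (deriv F s₀).im s₀ :=
      Complex.imCLM.hasFDerivAt.comp_hasDerivAt s₀ hdF
    exact IsLocalMin.hasDerivAt_eq_zero (Eventually.of_forall hs₀) h1
  have hreal : deriv F s₀ = ((deriv F s₀).re : ℝ) := Complex.ext rfl (by simp [him])
  refine ⟨s₀, (deriv F s₀).re, ?_, hreal, hs₀, hlow⟩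
  obtain ⟨ε, hε, hin⟩ := horient s₀
  have h1 := hlow _ (hin (ε / 2) ⟨half_pos hε, half_lt_self hε⟩)
  simp at h1
  have h2 : (deriv F s₀).re ≠ 0 := fun h => hF' s₀ (by rw [hreal, h, Complex.ofReal_zero])
  exact lt_of_le_of_ne (nonneg_of_mul_nonneg_right h1 (half_pos hε)) h2.symm

theorem IsPreconnected.subset_of_disjoint_frontier {X : Type*} [TopologicalSpace X] {s t : Set X}
    (hs : IsPreconnected s) (hst : (s ∩ t).Nonempty) (hd : Disjoint s (frontier t)) : s ⊆ t := by
  have hcover : s ⊆ interior t ∪ (closure t)ᶜ := fun x hx => by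
    by_cases hxt : x ∈ closure t
    · exact Or.inl (by_contra fun h => hd.le_bot ⟨hx, hxt, h⟩)
    · exact Or.inr hxt
  rcases hs.subset_or_subset isOpen_interior isClosed_closure.isOpen_compl
    (disjoint_compl_right.mono_left (interior_subset.trans subset_closure)) hcover with h | h
  · exact h.trans interior_subset
  · obtain ⟨x, hxs, hxt⟩ := hst
    exact absurd (subset_closure hxt) (h hxs)

theorem isPreconnected_annulus {a b : ℝ} (ha : 0 ≤ a) :
    IsPreconnected {z : ℂ | a < ‖z‖ ∧ ‖z‖ < b} := by
  have himg : {z : ℂ | a < ‖z‖ ∧ ‖z‖ < b} =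
      (fun p : ℝ × ℝ => circleMap 0 p.1 p.2) '' (Ioo a b ×ˢ univ) := by
    ext z
    constructor
    · rintro hz
      exact ⟨(‖z‖, Complex.arg z), ⟨hz, mem_univ _⟩, by simp [circleMap]⟩
    · rintro ⟨⟨r, t⟩, ⟨hr, -⟩, rfl⟩
      simpa [abs_of_pos (ha.trans_lt hr.1)] using hr
  rw [himg]
  refine (isPreconnected_Ioo.prod isPreconnected_univ).image _ (Continuous.continuousOn ?_)
  unfold circleMap
  fun_prop

/-- A map which is injective on the unit circle and locally injective there is injective on an
annulus around it. -/
theorem exists_injOn_annulus {W : ℂ → ℂ} (hW : Continuous W)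
    (hloc : ∀ z ∈ Metric.sphere (0 : ℂ) 1, ∃ U ∈ nhds z, InjOn W U)
    (hinj : InjOn W (Metric.sphere 0 1)) :
    ∃ ε > 0, ε ≤ 1 ∧ InjOn W {z : ℂ | 1 - ε < ‖z‖ ∧ ‖z‖ < 1 + ε} := by
  obtain ⟨t, ht, htinj⟩ := hinj.exists_mem_nhdsSet (isCompact_sphere 0 1)
    (fun z _ => hW.continuousAt) hloc
  obtain ⟨U, hU, hsU, hUt⟩ := mem_nhdsSet_iff_exists.1 ht
  obtain ⟨ε, hε, hthick⟩ := (isCompact_sphere (0 : ℂ) 1).exists_thickening_subset_open hU hsU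
  refine ⟨min ε 1, by positivity, min_le_right _ _, htinj.mono fun z hz => hUt (hthick ?_)⟩
  have h1 : 1 - ε < ‖z‖ := by linarith [hz.1, min_le_left ε 1]
  have h2 : ‖z‖ < 1 + ε := by linarith [hz.2, min_le_left ε 1]
  refine Metric.mem_thickening_iff.2 ⟨circleMap 0 1 (Complex.arg z), by simp, ?_⟩
  have h3 : z - circleMap 0 1 (Complex.arg z) =
      ((‖z‖ - 1 : ℝ) : ℂ) * Complex.exp (Complex.arg z * Complex.I) := by
    conv_lhs => rw [← Complex.norm_mul_exp_arg_mul_I z]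
    simp [circleMap, sub_mul]
  rw [dist_eq_norm, h3, norm_mul, Complex.norm_exp_ofReal_mul_I, mul_one, Complex.norm_real,
    Real.norm_eq_abs, abs_lt]
  constructor <;> linarith

/-- The set of values that a continuous, locally injective map takes at two different points of a
compact set is compact. -/
theorem isCompact_setOf_double_value {X Y : Type*} [TopologicalSpace X] [T2Space X]
    [TopologicalSpace Y] [T2Space Y] {W : X → Y} (hW : Continuous W) {K : Set X} (hK : IsCompact K)
    (hloc : ∀ z ∈ K, ∃ U ∈ nhds z, InjOn W U) :
    IsCompact {p | ∃ a ∈ K, ∃ b ∈ K, a ≠ b ∧ W a = p ∧ W b = p} := by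
  set R : Set (X × X) := {x | x ∈ K ×ˢ K ∧ W x.1 = W x.2 ∧ x.1 ≠ x.2}
  have hclosed : IsClosed {x : X × X | x ∈ K ×ˢ K ∧ W x.1 = W x.2} :=
    (hK.prod hK).isClosed.inter (isClosed_eq (hW.comp continuous_fst) (hW.comp continuous_snd))
  have hR : IsClosed R := by
    refine isClosed_of_closure_subset fun x hx => ?_
    have hx' := closure_minimal (fun y hy => ⟨hy.1, hy.2.1⟩ :
      R ⊆ {x : X × X | x ∈ K ×ˢ K ∧ W x.1 = W x.2}) hclosed hx
    refine ⟨hx'.1, hx'.2, fun hne => ?_⟩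
    obtain ⟨U, hU, hinj⟩ := hloc x.1 hx'.1.1
    have hUU : U ×ˢ U ∈ nhds x := prod_mem_nhds hU (hne ▸ hU)
    obtain ⟨y, hyU, hyR⟩ := mem_closure_iff_nhds.1 hx _ hUU
    exact hyR.2.2 (hinj hyU.1 hyU.2 hyR.2.1)
  have himg : {p | ∃ a ∈ K, ∃ b ∈ K, a ≠ b ∧ W a = p ∧ W b = p} =
      (fun x : X × X => W x.1) '' R := by
    ext p
    constructor
    · rintro ⟨a, ha, b, hb, hab, rfl, h⟩
      exact ⟨(a, b), ⟨⟨ha, hb⟩, h.symm, hab⟩, rfl⟩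
    · rintro ⟨⟨a, b⟩, ⟨⟨ha, hb⟩, h, hab⟩, rfl⟩
      exact ⟨a, ha, b, hb, hab, rfl, h.symm⟩
  rw [himg]
  exact ((hK.prod hK).of_isClosed_subset hR fun x hx => hx.1).image (hW.comp continuous_fst)

theorem isOpen_image_of_nhds_le_map {X Y : Type*} [TopologicalSpace X] [TopologicalSpace Y]
    {W : X → Y} {U : Set X} (hU : IsOpen U) (hmap : ∀ z ∈ U, nhds (W z) ≤ map W (nhds z)) :
    IsOpen (W '' U) := by
  rw [isOpen_iff_mem_nhds]
  rintro _ ⟨z, hz, rfl⟩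
  exact hmap z hz (image_mem_map (hU.mem_nhds hz))

theorem local_homeo_of_Jac_ne_zero {W : ℂ → ℂ} (hW : ContDiff ℝ 1 W) {z : ℂ} (hz : Jac W z ≠ 0) :
    nhds (W z) ≤ map W (nhds z) ∧ ∃ U ∈ nhds z, InjOn W U := by
  have hdet : (fderiv ℝ W z).det ≠ 0 := hz
  have hd : HasStrictFDerivAt W
      (((fderiv ℝ W z).toContinuousLinearEquivOfDetNeZero hdet : ℂ ≃L[ℝ] ℂ) : ℂ →L[ℝ] ℂ) z := by
    rw [ContinuousLinearMap.coe_toContinuousLinearEquivOfDetNeZero]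
    exact hW.contDiffAt.hasStrictFDerivAt one_ne_zero
  refine ⟨hd.map_nhds_eq_of_equiv.ge, (hd.toOpenPartialHomeomorph W).source,
    (hd.toOpenPartialHomeomorph W).open_source.mem_nhds hd.mem_toOpenPartialHomeomorph_source, ?_⟩
  exact (hd.toOpenPartialHomeomorph W).injOn

/-- The image of the disk under a map, locally homeomorphic on the closed disk and injective on the
circle, lies inside the domain bounded by the image of the circle, provided that the domain and the
image of the closed disk are both supported from below at a common boundary point. -/
theorem mapsTo_ball_of_local_homeo {W : ℂ → ℂ} (hW : Continuous W) {D : Set ℂ} (hDo : IsOpen D)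
    (hmap : ∀ z ∈ Metric.closedBall (0 : ℂ) 1, nhds (W z) ≤ map W (nhds z))
    (hloc : ∀ z ∈ Metric.closedBall (0 : ℂ) 1, ∃ U ∈ nhds z, InjOn W U)
    (hinj : InjOn W (Metric.sphere 0 1)) (hfront : W '' Metric.sphere 0 1 = frontier D)
    {ζ₀ : ℂ} (hζ₀ : ‖ζ₀‖ = 1) (hlowD : ∀ z ∈ D, (W ζ₀).im ≤ z.im)
    (hlowW : ∀ z ∈ Metric.closedBall (0 : ℂ) 1, (W ζ₀).im ≤ (W z).im) :
    MapsTo W (Metric.ball 0 1) D := by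
  obtain ⟨ε, hε, hε1, hN⟩ := exists_injOn_annulus hW
    (fun z hz => hloc z (Metric.sphere_subset_closedBall hz)) hinj
  have hΓ : ∀ ζ : ℂ, ‖ζ‖ = 1 → W ζ ∈ frontier D := fun ζ hζ =>
    hfront ▸ mem_image_of_mem W (by simpa using hζ)
  have hΓ' : ∀ q ∈ frontier D, ∃ ζ : ℂ, ‖ζ‖ = 1 ∧ W ζ = q := fun q hq => by
    rw [← hfront] at hq
    obtain ⟨ζ, hζ, h⟩ := hq
    exact ⟨ζ, by simpa using hζ, h⟩
  have hfrD : frontier D = closure D \ D := hDo.frontier_eq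
  have hannulus : ∀ z : ℂ, 1 - ε < ‖z‖ → ‖z‖ < 1 + ε → ‖z‖ ≠ 1 → W z ∉ frontier D := by
    intro z hz1 hz2 hz h
    obtain ⟨ζ, hζ, hζz⟩ := hΓ' _ h
    exact hz (hN ⟨by linarith, by linarith⟩ ⟨hz1, hz2⟩ hζz ▸ hζ)
  have hnear : ∀ q ∈ frontier D, ∀ G : Set ℂ, q ∈ closure G →
      ∃ z : ℂ, 1 - ε < ‖z‖ ∧ ‖z‖ < 1 + ε ∧ W z ∈ G := by
    intro q hq G hG
    obtain ⟨ζ, hζ, rfl⟩ := hΓ' q hq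
    have hopen : IsOpen {z : ℂ | 1 - ε < ‖z‖ ∧ ‖z‖ < 1 + ε} :=
      (isOpen_lt continuous_const continuous_norm).inter
        (isOpen_lt continuous_norm continuous_const)
    obtain ⟨_, ⟨z, hz, rfl⟩, hzG⟩ := mem_closure_iff_nhds.1 hG _
      (hmap ζ (by simp [hζ]) (image_mem_map (hopen.mem_nhds ⟨by linarith, by linarith⟩)))
    exact ⟨z, hz.1, hz.2, hzG⟩
  have hKc : IsCompact (W '' Metric.closedBall 0 1) := (isCompact_closedBall 0 1).image hW
  have hBo : IsOpen (W '' Metric.ball 0 1) := isOpen_image_of_nhds_le_map Metric.isOpen_ball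
    fun z hz => hmap z (Metric.ball_subset_closedBall hz)
  have hK : ∀ q ∈ W '' Metric.closedBall 0 1, q ∈ W '' Metric.ball 0 1 ∨ q ∈ frontier D := by
    rintro _ ⟨z, hz, rfl⟩
    rcases (mem_closedBall_zero_iff.1 hz).lt_or_eq with h | h
    · exact Or.inl ⟨z, mem_ball_zero_iff.2 h, rfl⟩
    · exact Or.inr (hΓ z h)
  have hBK : W '' Metric.ball 0 1 ⊆ W '' Metric.closedBall 0 1 :=
    image_mono Metric.ball_subset_closedBall
  set M := closure D ∪ W '' Metric.closedBall 0 1 with hM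
  have hMfr : frontier M ⊆ frontier D := by
    intro q hq
    rcases frontier_union_subset _ _ hq with h | h
    · exact frontier_closure_subset h.1
    · rw [hKc.isClosed.frontier_eq] at h
      exact (hK q h.2.1).resolve_left fun h' => h.2.2 (interior_maximal hBK hBo h')
  have hMlow : ∀ q ∈ M, (W ζ₀).im ≤ q.im := by
    rintro q (hq | ⟨z, hz, rfl⟩)
    · exact closure_minimal hlowD (isClosed_le continuous_const Complex.continuous_im) hq
    · exact hlowW z hz
  have hout : ∀ z : ℂ, 1 < ‖z‖ → ‖z‖ < 1 + ε → W z ∉ M := by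
    intro z hz1 hz2 hzM
    have hpre : IsPreconnected (W '' {z : ℂ | 1 < ‖z‖ ∧ ‖z‖ < 1 + ε}) :=
      (isPreconnected_annulus zero_le_one).image W hW.continuousOn
    have hsub := hpre.subset_of_disjoint_frontier (t := M) ⟨W z, ⟨z, ⟨hz1, hz2⟩, rfl⟩, hzM⟩ (by
      rw [disjoint_left]
      rintro _ ⟨y, hy, rfl⟩ hyM
      exact hannulus y (by linarith [hy.1]) hy.2 hy.1.ne' (hMfr hyM))
    obtain ⟨y, hy1, hy2, hylow⟩ := hnear _ (hΓ ζ₀ hζ₀) {q : ℂ | q.im < (W ζ₀).im} (by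
      rw [Complex.closure_setOfPred_im_lt]
      exact le_refl (W ζ₀).im)
    have hy : 1 < ‖y‖ := by
      by_contra! h
      exact hylow.not_ge (hlowW y (mem_closedBall_zero_iff.2 h))
    exact hylow.not_ge (hMlow _ (hsub ⟨y, ⟨hy, hy2⟩, rfl⟩))
  have hin : ∀ z : ℂ, 1 - ε < ‖z‖ → ‖z‖ < 1 → W z ∈ D := by
    have hpre : IsPreconnected (W '' {z : ℂ | 1 - ε < ‖z‖ ∧ ‖z‖ < 1}) :=
      (isPreconnected_annulus (by linarith)).image W hW.continuousOn
    obtain ⟨y, hy1, hy2, hyD⟩ := hnear _ (hΓ ζ₀ hζ₀) D (frontier_subset_closure (hΓ ζ₀ hζ₀))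
    have hyne : ‖y‖ ≠ 1 := fun h => (hfrD ▸ hΓ y h).2 hyD
    have hyle : ‖y‖ ≤ 1 := by
      by_contra! h
      exact hout y h hy2 (Or.inl (subset_closure hyD))
    have hsub := hpre.subset_of_disjoint_frontier (t := D)
      ⟨W y, ⟨y, ⟨hy1, hyle.lt_of_ne hyne⟩, rfl⟩, hyD⟩ (by
      rw [disjoint_left]
      rintro _ ⟨x, hx, rfl⟩
      exact hannulus x hx.1 (by linarith [hx.2]) hx.2.ne)
    exact fun z hz1 hz2 => hsub ⟨z, ⟨hz1, hz2⟩, rfl⟩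
  have hcl : W '' Metric.ball 0 1 ⊆ closure D := by
    by_contra hnot
    set G := W '' Metric.ball 0 1 \ closure D
    have hGne : G.Nonempty := not_subset.1 hnot
    have hGK : closure G ⊆ W '' Metric.closedBall 0 1 :=
      closure_minimal (sdiff_subset.trans hBK) hKc.isClosed
    have hGo : IsOpen G := hBo.sdiff isClosed_closure
    have hGuniv : G ≠ univ := fun h => by
      have h1 : IsCompact (univ : Set ℂ) :=
        hKc.of_isClosed_subset isClosed_univ (by rw [← h]; exact subset_closure.trans hGK)
      exact noncompact_univ ℂ h1
    obtain ⟨q, hq⟩ := nonempty_frontier_iff.2 ⟨hGne, hGuniv⟩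
    rw [hGo.frontier_eq] at hq
    have hqD : q ∉ D := fun hqD => by
      obtain ⟨y, hyD, hyG⟩ := mem_closure_iff.1 hq.1 D hDo hqD
      exact hyG.2 (subset_closure hyD)
    have hqΓ : q ∈ frontier D := by
      rcases hK q (hGK hq.1) with h | h
      · rw [hfrD]
        exact ⟨by_contra fun h' => hq.2 ⟨h, h'⟩, hqD⟩
      · exact h
    obtain ⟨z, hz1, hz2, hzG⟩ := hnear q hqΓ G hq.1
    rcases lt_trichotomy ‖z‖ 1 with h | h | h
    · exact hzG.2 (subset_closure (hin z hz1 h))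
    · exact hzG.2 (frontier_subset_closure (hΓ z h))
    · exact hout z h hz2 (Or.inr (hBK hzG.1))
  intro z hz
  by_contra hzD
  obtain ⟨ζ, hζ, hζz⟩ := hΓ' (W z) (by rw [hfrD]; exact ⟨hcl ⟨z, hz, rfl⟩, hzD⟩)
  have hnhds : W ⁻¹' (W '' Metric.ball 0 1) ∈ nhds ζ :=
    (hBo.preimage hW).mem_nhds (by rw [mem_preimage, hζz]; exact mem_image_of_mem W hz)
  have htend : Tendsto (fun r : ℝ => (r : ℂ) * ζ) (nhdsWithin 1 (Ioi 1)) (nhds ζ) := by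
    have : Continuous fun r : ℝ => (r : ℂ) * ζ := by fun_prop
    simpa using (this.tendsto 1).mono_left nhdsWithin_le_nhds
  obtain ⟨r, hrB, hr⟩ := ((htend.eventually hnhds).and
    (Ioo_mem_nhdsGT (show (1 : ℝ) < 1 + ε by linarith))).exists
  have hnorm : ‖(r : ℂ) * ζ‖ = r := by
    rw [norm_mul, hζ, mul_one, Complex.norm_real, Real.norm_of_nonneg (by linarith [hr.1])]
  exact hout _ (by rw [hnorm]; exact hr.1) (by rw [hnorm]; exact hr.2) (Or.inr (hBK hrB))

/-- A locally homeomorphic map of the closed disk that is injective on the circle and maps the open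
disk into a domain bounded by the image of the circle is a bijection of the disk onto the domain. -/
theorem bijOn_ball_of_mapsTo {W : ℂ → ℂ} (hW : Continuous W) {D : Set ℂ} (hDo : IsOpen D)
    (hDc : IsConnected D)
    (hmap : ∀ z ∈ Metric.ball (0 : ℂ) 1, nhds (W z) ≤ map W (nhds z))
    (hloc : ∀ z ∈ Metric.closedBall (0 : ℂ) 1, ∃ U ∈ nhds z, InjOn W U)
    (hinj : InjOn W (Metric.sphere 0 1)) (hfront : W '' Metric.sphere 0 1 = frontier D)
    (hmaps : MapsTo W (Metric.ball 0 1) D) : BijOn W (Metric.ball 0 1) D := by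
  have hfrD : Disjoint D (frontier D) := by
    rw [hDo.frontier_eq]
    exact disjoint_sdiff_right
  have hball : ∀ z ∈ Metric.closedBall (0 : ℂ) 1, W z ∈ D → z ∈ Metric.ball (0 : ℂ) 1 := by
    intro z hz hzD
    rw [mem_closedBall_zero_iff] at hz
    refine mem_ball_zero_iff.2 (hz.lt_of_ne fun h => hfrD.le_bot ⟨hzD, ?_⟩)
    exact hfront ▸ mem_image_of_mem W (by simpa using h)
  have hsphere : ∀ z ∈ Metric.closedBall (0 : ℂ) 1, W z ∈ frontier D →
      z ∈ Metric.sphere (0 : ℂ) 1 := by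
    intro z hz hzD
    rw [mem_closedBall_zero_iff] at hz
    rw [mem_sphere_zero_iff_norm]
    by_contra h
    exact hfrD.le_bot ⟨hmaps (mem_ball_zero_iff.2 (hz.lt_of_ne h)), hzD⟩
  have hBo : IsOpen (W '' Metric.ball 0 1) := isOpen_image_of_nhds_le_map Metric.isOpen_ball hmap
  refine ⟨hmaps, ?_, ?_⟩
  · set S' := {p | ∃ a ∈ Metric.closedBall (0 : ℂ) 1, ∃ b ∈ Metric.closedBall (0 : ℂ) 1,
      a ≠ b ∧ W a = p ∧ W b = p} with hS'
    have hS'c : IsClosed S' :=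
      (isCompact_setOf_double_value hW (isCompact_closedBall 0 1) hloc).isClosed
    have hSo : IsOpen (S' ∩ D) := by
      rw [isOpen_iff_mem_nhds]
      rintro _ ⟨⟨a, ha, b, hb, hab, rfl, hba⟩, hD⟩
      have ha' := hball a ha hD
      have hb' := hball b hb (hba ▸ hD)
      obtain ⟨u, v, hu, hv, hau, hbv, huv⟩ := t2_separation hab
      have h1 := hmap a ha' (image_mem_map
        (inter_mem (hu.mem_nhds hau) (Metric.isOpen_ball.mem_nhds ha')))
      have h2 := hmap b hb' (image_mem_map
        (inter_mem (hv.mem_nhds hbv) (Metric.isOpen_ball.mem_nhds hb')))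
      rw [hba] at h2
      filter_upwards [h1, h2] with p hp1 hp2
      obtain ⟨x, hx, rfl⟩ := hp1
      obtain ⟨y, hy, hyx⟩ := hp2
      exact ⟨⟨x, Metric.ball_subset_closedBall hx.2, y, Metric.ball_subset_closedBall hy.2,
        huv.ne_of_mem hx.1 hy.1, rfl, hyx⟩, hmaps hx.2⟩
    intro a ha b hb hab
    by_contra hne
    have hsub : D ⊆ S' ∩ D := hDc.isPreconnected.subset_of_disjoint_frontier
      ⟨W a, hmaps ha, ⟨a, Metric.ball_subset_closedBall ha, b, Metric.ball_subset_closedBall hb,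
        hne, rfl, hab.symm⟩, hmaps ha⟩ (by
      rw [disjoint_left, hSo.frontier_eq]
      exact fun p hp hp' => hp'.2 ⟨closure_minimal inter_subset_left hS'c hp'.1, hp⟩)
    have hW1 : W 1 ∈ frontier D := hfront ▸ mem_image_of_mem W (by simp)
    obtain ⟨x, hx, y, hy, hxy, hx1, hy1⟩ : W 1 ∈ S' := closure_minimal
      (hsub.trans inter_subset_left) hS'c (frontier_subset_closure hW1)
    exact hxy (hinj (hsphere x hx (hx1 ▸ hW1)) (hsphere y hy (hy1 ▸ hW1)) (hx1.trans hy1.symm))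
  · have h0 : (0 : ℂ) ∈ Metric.ball (0 : ℂ) 1 := by simp
    refine hDc.isPreconnected.subset_of_disjoint_frontier ⟨W 0, hmaps h0, 0, h0, rfl⟩ ?_
    rw [disjoint_left, hBo.frontier_eq]
    rintro p hpD ⟨hp, hp'⟩
    obtain ⟨z, hz, rfl⟩ := closure_minimal (image_mono Metric.ball_subset_closedBall)
      ((isCompact_closedBall (0 : ℂ) 1).image hW).isClosed hp
    exact hp' ⟨z, hball z hz hpD, rfl⟩

theorem injOn_sphere_of_injOn_Ico {F : ℝ → ℂ} (hper : ∀ t, F (t + 2 * π) = F t)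
    (hinj : InjOn F (Ico 0 (2 * π))) {W : ℂ → ℂ} (hbd : ∀ t, W (circleMap 0 1 t) = F t) :
    InjOn W (Metric.sphere 0 1) := by
  intro x hx y hy hxy
  obtain ⟨a, rfl⟩ := exists_circleMap_eq (mem_sphere_zero_iff_norm.1 hx)
  obtain ⟨b, rfl⟩ := exists_circleMap_eq (mem_sphere_zero_iff_norm.1 hy)
  rw [hbd, hbd] at hxy
  obtain ⟨k, rfl⟩ := exists_int_of_apply_eq hper hinj hxy
  exact (periodic_circleMap 0 1).int_mul k b

theorem image_sphere_eq_image_Ico {F : ℝ → ℂ} (hper : ∀ t, F (t + 2 * π) = F t)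
    {W : ℂ → ℂ} (hbd : ∀ t, W (circleMap 0 1 t) = F t) :
    W '' Metric.sphere 0 1 = F '' Ico 0 (2 * π) := by
  ext q
  constructor
  · rintro ⟨ζ, hζ, rfl⟩
    obtain ⟨t, rfl⟩ := exists_circleMap_eq (mem_sphere_zero_iff_norm.1 hζ)
    obtain ⟨s, hs, hst⟩ := (show Function.Periodic F (2 * π) from hper).exists_mem_Ico₀
      Real.two_pi_pos t
    exact ⟨s, hs, by rw [hbd, hst]⟩
  · rintro ⟨t, -, rfl⟩
    exact ⟨circleMap 0 1 t, by simp, hbd t⟩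

/-- Alessandrini–Nesi criterion ('if' direction): if `F` is an orientation-preserving
`C¹` diffeomorphism of the circle onto `∂D`, `w = P[F]` is `C¹` up to the boundary and
the boundary Jacobian is everywhere positive, then `w` is a diffeomorphism of the unit
disk onto `D`. -/
theorem alessandrini_nesi
    (D : Set ℂ) (hDo : IsOpen D) (hDb : Bornology.IsBounded D) (hDc : IsConnected D)
    (F : ℝ → ℂ) (hF : ContDiff ℝ 1 F) (hFper : ∀ t, F (t + 2 * π) = F t)
    (hF' : ∀ t, deriv F t ≠ 0)
    (hFinj : InjOn F (Ico 0 (2 * π)))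
    (hfront : F '' Ico 0 (2 * π) = frontier D)
    -- orientation preserving: the inner normal `i F'(t)` points into `D`
    (horient : ∀ t, ∃ ε > (0:ℝ), ∀ u ∈ Ioo (0:ℝ) ε,
        F t + (u : ℂ) * (Complex.I * deriv F t) ∈ D)
    (W : ℂ → ℂ) (hW : ContDiff ℝ 1 W)
    (hWw : Set.EqOn W (poissonExt F) (Metric.ball 0 1))
    (hJ : ∀ ζ : ℂ, ‖ζ‖ = 1 → 0 < Jac W ζ) :
    Set.BijOn (poissonExt F) (Metric.ball (0:ℂ) 1) D ∧
    ContDiffOn ℝ (⊤ : ℕ∞) (poissonExt F) (Metric.ball (0:ℂ) 1) ∧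
    ∀ z ∈ Metric.ball (0:ℂ) 1, Jac (poissonExt F) z ≠ 0 := by
  have hbd := eq_boundary_of_eqOn_poissonExt hF.continuous hFper hW.continuous hWw
  obtain ⟨s₀, c, hc, hd, hmin, hlowD⟩ :=
    exists_lowest_point hDo hDb hDc.nonempty hF hFper hF' hfront horient
  obtain ⟨Λ, hΛ, hexp, hturn⟩ :=
    exists_log_deriv_of_simple_closed hF hFper hF' hFinj hc hd hmin
  obtain ⟨A, B, hA, hB, hAB⟩ := exists_poissonExt_eq_add_conj hF.continuous hFper
  have hWAB : ∀ z ∈ Metric.ball (0 : ℂ) 1, W z = A z + (starRingEnd ℂ) (B z) :=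
    fun z hz => (hWw hz).trans (hAB z hz)
  have hJball : ∀ z ∈ Metric.ball (0 : ℂ) 1, 0 < Jac W z := fun z hz =>
    Jac_pos_of_boundary hW hA hB hWAB hbd hΛ hexp hturn hJ hz
  have hlocal : ∀ z ∈ Metric.closedBall (0 : ℂ) 1,
      nhds (W z) ≤ map W (nhds z) ∧ ∃ U ∈ nhds z, InjOn W U := fun z hz => by
    refine local_homeo_of_Jac_ne_zero hW (ne_of_gt ?_)
    rcases (mem_closedBall_zero_iff.1 hz).lt_or_eq with h | h
    · exact hJball z (mem_ball_zero_iff.2 h)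
    · exact hJ z h
  have hsphere := injOn_sphere_of_injOn_Ico hFper hFinj hbd
  have hWfront : W '' Metric.sphere 0 1 = frontier D :=
    (image_sphere_eq_image_Ico hFper hbd).trans hfront
  have hlowW : ∀ z ∈ Metric.closedBall (0 : ℂ) 1, (F s₀).im ≤ (W z).im := by
    rw [← closure_ball (0 : ℂ) one_ne_zero]
    refine fun z hz => closure_minimal (fun x hx => ?_)
      (isClosed_le continuous_const (Complex.continuous_im.comp hW.continuous)) hz
    show (F s₀).im ≤ (W x).im
    rw [hWw hx]
    exact le_im_poissonExt hF.continuous hmin hx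
  have hmaps : MapsTo W (Metric.ball 0 1) D :=
    mapsTo_ball_of_local_homeo hW.continuous hDo (fun z hz => (hlocal z hz).1)
      (fun z hz => (hlocal z hz).2) hsphere hWfront (ζ₀ := circleMap 0 1 s₀) (by simp)
      (by simpa only [hbd] using hlowD) (by simpa only [hbd] using hlowW)
  have hbij : BijOn W (Metric.ball 0 1) D :=
    bijOn_ball_of_mapsTo hW.continuous hDo hDc
      (fun z hz => (hlocal z (Metric.ball_subset_closedBall hz)).1)
      (fun z hz => (hlocal z hz).2) hsphere hWfront hmaps
  refine ⟨hbij.congr hWw, ?_, fun z hz => ?_⟩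
  · have hball : IsOpen (Metric.ball (0 : ℂ) 1) := Metric.isOpen_ball
    have hA' : ContDiffOn ℝ (⊤ : ℕ∞) A (Metric.ball 0 1) := (hA.contDiffOn hball).restrict_scalars ℝ
    have hB' : ContDiffOn ℝ (⊤ : ℕ∞) B (Metric.ball 0 1) := (hB.contDiffOn hball).restrict_scalars ℝ
    exact (hA'.add (Complex.conjCLE.contDiff.comp_contDiffOn hB')).congr hAB
  · have heq : W =ᶠ[nhds z] poissonExt F :=
      eventually_of_mem (Metric.isOpen_ball.mem_nhds hz) hWw
    rw [Jac, ← heq.fderiv_eq]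
    exact (hJball z hz).ne'
end
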